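/- arXiv:2404.12350 — 11 statements merged into one kernel-verified Lean document; each statement's English description precedes it below -/
import Mathlib

section
/- Assume f satisfies the ellipticity condition (f_i(λ) > 0 on Γ for all i) and the concavity condition. Let σ ∈ ℝ satisfy sup_{∂Γ} f < σ < sup_Γ f, where sup_{∂Γ} f = sup_{λ₀∈∂Γ} limsup_{λ→λ₀} f(λ), and set ∂Γ^σ = {λ ∈ Γ : f(λ) = σ}. Suppose μ ∈ ℝⁿ and δ, R > 0 are such that (μ − 2δ·(1,…,1) + Γₙ) ∩ ∂Γ^σ ⊆ B_R(0), the open Euclidean ball of radius R about the origin. Then there exists a constant ε > 0, depending only on σ, μ, δ, R and f, such that for every λ ∈ ∂Γ^σ, either Σ_{i=1}^n f_i(λ)(μ_i − λ_i) ≥ ε(1 + Σ_{i=1}^n f_i(λ) + |Σ_{i=1}^n f_i(λ)λ_i|), or f_i(λ) ≥ ε(1 + Σ_{j=1}^n f_j(λ) + |Σ_{j=1}^n f_j(λ)λ_j|) for every index 1 ≤ i ≤ n. -/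
/-!
By concavity the gradient of `f` is a supergradient, so ellipticity makes `f` increasing in every
coordinate and `{f > σ}` absorbs the positive orthant; moreover `{f > σ}` is open and `{f ≥ σ}` is
closed. An orthant `x + closure Γₙ` is connected and meets `{f > σ}`, so it lies inside `{f > σ}`
as soon as it misses the level set `{f = σ}`. By the boundedness hypothesis this is the case for
the points `X j = μ - δ • 𝟙 + T • e_j` with `T` large, hence `f (X j) ≥ σ + c` for some `c > 0`.
Evaluating a supergradient `v ≥ 0` of `f` at a point `l` of the level set on `X j` gives
`c + δ * ∑ i, v i ≤ ∑ i, v i * (μ i - l i) + T * v j`. The right-hand side thus controls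
`1 + ∑ i, v i + |∑ i, v i * l i|`, and one of its two summands carries a fixed fraction of it.
-/

open Filter Topology

/-- The `i`-th partial derivative `f_i(x) = ∂f/∂λ_i (x)`. -/
noncomputable def fpartial {n : ℕ} (f : EuclideanSpace ℝ (Fin n) → ℝ) (i : Fin n)
    (x : EuclideanSpace ℝ (Fin n)) : ℝ :=
  fderiv ℝ f x (EuclideanSpace.single i 1)

section Superlevel

variable {X : Type*}

theorem superlevel_nonempty_of_lt_iSup {s : Set X} {f : X → ℝ} {σ : ℝ}
    (hσ : (σ : EReal) < ⨆ x ∈ s, (f x : EReal)) : {x ∈ s | σ < f x}.Nonempty := by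
  obtain ⟨x, hx, hσx⟩ := lt_biSup_iff.1 hσ
  exact ⟨x, hx, EReal.coe_lt_coe_iff.1 hσx⟩

variable [TopologicalSpace X]

theorem isClosed_superlevel_of_limsup_lt {β : Type*} [CompleteLinearOrder β] {s : Set X}
    {g : X → β} {b : β} (hg : UpperSemicontinuousOn g s)
    (hb : ∀ x ∈ closure s \ s, limsup g (𝓝[s] x) < b) :
    IsClosed {x ∈ s | b ≤ g x} := by
  refine isClosed_of_closure_subset fun x hx => ?_
  have hfreq : ∃ᶠ y in 𝓝[s] x, b ≤ g y := frequently_nhdsWithin_iff.2 <|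
    (mem_closure_iff_frequently.1 hx).mono fun y hy => hy.symm
  have hxs : x ∈ s := by
    by_contra hxs
    have hxcl : x ∈ closure s := closure_mono (Set.sep_subset s _) hx
    exact hfreq ((eventually_lt_of_limsup_lt (hb x ⟨hxcl, hxs⟩)).mono fun y hy => hy.not_ge)
  exact ⟨hxs, not_lt.1 fun hlt => hfreq ((hg x hxs b hlt).mono fun y hy => hy.not_ge)⟩

theorem isClosed_superlevel_of_iSup_limsup_lt {s : Set X} {f : X → ℝ} {σ : ℝ}
    (hf : ContinuousOn f s)
    (hσ : ⨆ x ∈ frontier s, limsup (fun y => (f y : EReal)) (𝓝[s] x) < (σ : EReal)) :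
    IsClosed {x ∈ s | σ ≤ f x} := by
  have hcoe : ContinuousOn (fun x => (f x : EReal)) s :=
    continuous_coe_real_ereal.comp_continuousOn hf
  have hlimsup : ∀ x ∈ closure s \ s, limsup (fun y => (f y : EReal)) (𝓝[s] x) < σ :=
    fun x hx => (le_biSup (fun x => limsup (fun y => (f y : EReal)) (𝓝[s] x))
      (show x ∈ frontier s from ⟨hx.1, fun h => hx.2 (interior_subset h)⟩)).trans_lt hσ
  simpa only [EReal.coe_le_coe_iff] using
    isClosed_superlevel_of_limsup_lt hcoe.upperSemicontinuousOn hlimsup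

end Superlevel

section Orthant

variable {ι : Type*}

/-- The inclusion `s + Γₙ ⊆ s`, where `Γₙ` is the open positive orthant. -/
def AbsorbsOrthant (s : Set (EuclideanSpace ℝ ι)) : Prop :=
  ∀ x ∈ s, ∀ y : EuclideanSpace ℝ ι, (∀ i, x i < y i) → y ∈ s

theorem absorbsOrthant_of_convex_cone {s : Set (EuclideanSpace ℝ ι)} (hconv : Convex ℝ s)
    (hcone : ∀ x ∈ s, ∀ t : ℝ, 0 < t → t • x ∈ s)
    (hpos : {x : EuclideanSpace ℝ ι | ∀ i, 0 < x i} ⊆ s) : AbsorbsOrthant s := by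
  intro x hx y hxy
  have hsub : y - x ∈ s := hpos fun i => sub_pos.2 (hxy i)
  have hmid : midpoint ℝ x (y - x) ∈ s := hconv.midpoint_mem hx hsub
  simpa [midpoint_eq_smul_add] using hcone _ hmid 2 two_pos

theorem convex_setOf_forall_le (x : EuclideanSpace ℝ ι) :
    Convex ℝ {y : EuclideanSpace ℝ ι | ∀ i, x i ≤ y i} :=
  (convex_Ici x.ofLp).is_linear_preimage ⟨fun _ _ => rfl, fun _ _ => rfl⟩

theorem setOf_forall_le_subset_of_isOpen_of_isClosed [Finite ι]
    {U K : Set (EuclideanSpace ℝ ι)}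
    (hU : IsOpen U) (hK : IsClosed K) (hUK : U ⊆ K) (hne : U.Nonempty) (habsorbs : AbsorbsOrthant U)
    {x : EuclideanSpace ℝ ι} (hx : ∀ y ∈ K, (∀ i, x i ≤ y i) → y ∈ U) :
    {y : EuclideanSpace ℝ ι | ∀ i, x i ≤ y i} ⊆ U := by
  cases nonempty_fintype ι
  obtain ⟨u, hu⟩ := hne
  let z : EuclideanSpace ℝ ι := WithLp.toLp 2 fun i => max (x i) (u i) + 1
  have hzx : ∀ i, x i ≤ z i := fun i => by
    linarith [le_max_left (x i) (u i), show z i = max (x i) (u i) + 1 from rfl]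
  have hzU : z ∈ U := habsorbs u hu z fun i => by
    linarith [le_max_right (x i) (u i), show z i = max (x i) (u i) + 1 from rfl]
  refine (convex_setOf_forall_le x).isPreconnected.subset_left_of_subset_union hU
    hK.isOpen_compl (Set.disjoint_compl_right_iff_subset.2 hUK) (fun y hy => ?_) ⟨z, hzx, hzU⟩
  exact (em (y ∈ K)).imp (fun hyK => hx y hyK hy) id

end Orthant

section Supergradient

variable {ι : Type*} [Fintype ι]

/-- `v` is a supergradient of `f` on `s` at `x`: the affine function with gradient `v` agreeing
with `f` at `x` dominates `f` on `s`. -/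
def IsSupergradient (f : EuclideanSpace ℝ ι → ℝ) (s : Set (EuclideanSpace ℝ ι))
    (x : EuclideanSpace ℝ ι) (v : ι → ℝ) : Prop :=
  ∀ y ∈ s, f y ≤ f x + ∑ i, v i * (y i - x i)

theorem IsSupergradient.le_of_forall_le {f : EuclideanSpace ℝ ι → ℝ}
    {s : Set (EuclideanSpace ℝ ι)} {x y : EuclideanSpace ℝ ι} {v : ι → ℝ}
    (h : IsSupergradient f s x v) (hv : ∀ i, 0 ≤ v i) (hy : y ∈ s) (hyx : ∀ i, y i ≤ x i) :
    f y ≤ f x := by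
  have hsum : ∑ i, v i * (y i - x i) ≤ 0 := Finset.sum_nonpos fun i _ =>
    mul_nonpos_of_nonneg_of_nonpos (hv i) (sub_nonpos.2 (hyx i))
  linarith [h y hy]

theorem absorbsOrthant_superlevel {f : EuclideanSpace ℝ ι → ℝ} {s : Set (EuclideanSpace ℝ ι)}
    (hs : AbsorbsOrthant s)
    (hf : ∀ x ∈ s, ∃ v, (∀ i, 0 ≤ v i) ∧ IsSupergradient f s x v) (σ : ℝ) :
    AbsorbsOrthant {x ∈ s | σ < f x} := by
  rintro x ⟨hx, hσ⟩ y hxy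
  have hy : y ∈ s := hs x hx y hxy
  obtain ⟨v, hv, hsup⟩ := hf y hy
  exact ⟨hy, hσ.trans_le (hsup.le_of_forall_le hv hx fun i => (hxy i).le)⟩

theorem le_add_of_concaveOn_of_hasFDerivAt {E : Type*} [NormedAddCommGroup E] [NormedSpace ℝ E]
    {s : Set E} {f : E → ℝ} {f' : E →L[ℝ] ℝ} {x y : E} (hf : ConcaveOn ℝ s f) (hx : x ∈ s)
    (hy : y ∈ s) (hf' : HasFDerivAt f f' x) : f y ≤ f x + f' (y - x) := by
  have hderiv : HasDerivAt (f ∘ AffineMap.lineMap (k := ℝ) x y) (f' (y - x)) 0 :=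
    hf'.comp_hasDerivAt_of_eq 0 AffineMap.hasDerivAt_lineMap (by simp)
  have hslope := (hf.comp_affineMap (AffineMap.lineMap x y)).slope_le_of_hasDerivAt
    (x := 0) (y := 1) (by simpa using hx) (by simpa using hy) one_pos hderiv
  simp only [slope_def_field, Function.comp_apply, AffineMap.lineMap_apply_one,
    AffineMap.lineMap_apply_zero, sub_zero, div_one] at hslope
  linarith

theorem fderiv_apply_eq_sum_fpartial {n : ℕ} (f : EuclideanSpace ℝ (Fin n) → ℝ)
    (x w : EuclideanSpace ℝ (Fin n)) : fderiv ℝ f x w = ∑ i, fpartial f i x * w i := by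
  conv_lhs => rw [← (EuclideanSpace.basisFun (Fin n) ℝ).sum_repr w]
  simp [fpartial, mul_comm]

theorem isSupergradient_fpartial {n : ℕ} {f : EuclideanSpace ℝ (Fin n) → ℝ}
    {s : Set (EuclideanSpace ℝ (Fin n))} {x : EuclideanSpace ℝ (Fin n)} (hf : ConcaveOn ℝ s f)
    (hx : x ∈ s) (hd : DifferentiableAt ℝ f x) :
    IsSupergradient f s x fun i => fpartial f i x := fun y hy => by
  simpa only [fderiv_apply_eq_sum_fpartial, PiLp.sub_apply] using
    le_add_of_concaveOn_of_hasFDerivAt hf hx hy hd.hasFDerivAt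

end Supergradient

section TestPoint

variable {ι : Type*} [DecidableEq ι] {μ : EuclideanSpace ℝ ι} {δ T : ℝ}

/-- The point `μ - δ • 𝟙 + T • e_j`, the apex of an orthant that misses the level set once `T` is
large. -/
noncomputable def testPoint (μ : EuclideanSpace ℝ ι) (δ T : ℝ) (j : ι) : EuclideanSpace ℝ ι :=
  WithLp.toLp 2 fun i => μ i - δ + if i = j then T else 0

theorem testPoint_apply (μ : EuclideanSpace ℝ ι) (δ T : ℝ) (j i : ι) :
    testPoint μ δ T j i = μ i - δ + if i = j then T else 0 :=
  rfl

theorem sub_le_testPoint_apply (hT : 0 ≤ T) (j i : ι) : μ i - δ ≤ testPoint μ δ T j i := by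
  rw [testPoint_apply]
  split_ifs <;> linarith

variable [Fintype ι]

theorem le_testPoint_apply_self {R : ℝ} (hT : R + ‖μ‖ + δ ≤ T) (j : ι) :
    R ≤ testPoint μ δ T j j := by
  have hμ : |μ j| ≤ ‖μ‖ := PiLp.norm_apply_le μ j
  rw [testPoint_apply, if_pos rfl]
  linarith [neg_le_of_abs_le hμ]

theorem sum_mul_testPoint_sub (l : EuclideanSpace ℝ ι) (v : ι → ℝ) (j : ι) :
    ∑ i, v i * (testPoint μ δ T j i - l i) =
      ∑ i, v i * (μ i - l i) - δ * ∑ i, v i + T * v j := by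
  calc ∑ i, v i * (testPoint μ δ T j i - l i)
      = ∑ i, (v i * (μ i - l i) - δ * v i + if i = j then T * v i else 0) :=
        Finset.sum_congr rfl fun i _ => by rw [testPoint_apply]; split_ifs <;> ring
    _ = ∑ i, v i * (μ i - l i) - δ * ∑ i, v i + T * v j := by
        rw [Finset.sum_add_distrib, Finset.sum_sub_distrib, ← Finset.mul_sum,
          Finset.sum_ite_eq' Finset.univ j, if_pos (Finset.mem_univ j)]

theorem testPoint_mem_of_level_subset_ball {U K : Set (EuclideanSpace ℝ ι)} {R : ℝ}
    (hU : IsOpen U) (hK : IsClosed K) (hUK : U ⊆ K) (hne : U.Nonempty) (habsorbs : AbsorbsOrthant U)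
    (hδ : 0 < δ) (hT₀ : 0 ≤ T) (hT : R + ‖μ‖ + δ ≤ T)
    (hbound : ∀ x ∈ K \ U, (∀ i, μ i - 2 * δ < x i) → x ∈ Metric.ball 0 R) (j : ι) :
    testPoint μ δ T j ∈ U := by
  refine setOf_forall_le_subset_of_isOpen_of_isClosed hU hK hUK hne habsorbs
    (fun y hyK hy => ?_) fun _ => le_rfl
  by_contra hyU
  have hnorm : ‖y‖ < R := mem_ball_zero_iff.1 <| hbound y ⟨hyK, hyU⟩ fun i => by
    linarith [hy i, sub_le_testPoint_apply (μ := μ) (δ := δ) hT₀ j i]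
  have hyj : |y j| ≤ ‖y‖ := PiLp.norm_apply_le y j
  linarith [le_testPoint_apply_self hT j, hy j, le_abs_self (y j)]

end TestPoint

section Dichotomy

variable {ι : Type*} {v : ι → ℝ}

theorem le_or_forall_le_of_forall_le_mul {C T Q D : ℝ} (hC : 0 < C) (hT : 0 ≤ T)
    (h : ∀ j, Q ≤ C * (D + T * v j)) :
    1 / (C * (1 + T)) * Q ≤ D ∨ ∀ j, 1 / (C * (1 + T)) * Q ≤ v j := by
  refine or_iff_not_imp_left.2 fun hD j => not_lt.1 fun hvj => ?_
  have hlt : D + T * v j < 1 / (C * (1 + T)) * Q + T * (1 / (C * (1 + T)) * Q) :=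
    add_lt_add_of_lt_of_le (not_le.1 hD) (mul_le_mul_of_nonneg_left hvj.le hT)
  have hQ : C * (1 / (C * (1 + T)) * Q + T * (1 / (C * (1 + T)) * Q)) = Q := by field_simp
  linarith [h j, mul_lt_mul_of_pos_left hlt hC]

variable [Fintype ι]

theorem abs_sum_mul_le_mul_sum {a : ι → ℝ} {M : ℝ} (hv : ∀ i, 0 ≤ v i) (ha : ∀ i, |a i| ≤ M) :
    |∑ i, v i * a i| ≤ M * ∑ i, v i := by
  calc |∑ i, v i * a i| ≤ ∑ i, |v i * a i| := Finset.abs_sum_le_sum_abs _ _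
    _ ≤ ∑ i, M * v i := Finset.sum_le_sum fun i _ => by
        rw [abs_mul, abs_of_nonneg (hv i), mul_comm]
        exact mul_le_mul_of_nonneg_right (ha i) (hv i)
    _ = M * ∑ i, v i := (Finset.mul_sum _ _ _).symm

theorem abs_sum_mul_le_add_mul_sum {l m : ι → ℝ} {M T : ℝ} (hv : ∀ i, 0 ≤ v i) (hm : ∀ i, |m i| ≤ M)
    (hT : 0 ≤ T) (j : ι) (hW : 0 ≤ ∑ i, v i * (m i - l i) + T * v j) :
    |∑ i, v i * l i| ≤ (∑ i, v i * (m i - l i) + T * v j) + (M + T) * ∑ i, v i := by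
  have hsplit : ∑ i, v i * (m i - l i) = ∑ i, v i * m i - ∑ i, v i * l i := by
    simp only [mul_sub, Finset.sum_sub_distrib]
  have hvj : T * v j ≤ T * ∑ i, v i := mul_le_mul_of_nonneg_left
    (Finset.single_le_sum (fun i _ => hv i) (Finset.mem_univ j)) hT
  have hTv : 0 ≤ T * v j := mul_nonneg hT (hv j)
  obtain ⟨hlower, hupper⟩ := abs_le.1 (abs_sum_mul_le_mul_sum hv hm)
  exact abs_le.2 ⟨by linarith, by linarith⟩

theorem one_add_sum_add_abs_sum_le {l m : ι → ℝ} {M T δ c : ℝ} (hv : ∀ i, 0 ≤ v i)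
    (hm : ∀ i, |m i| ≤ M) (hT : 0 ≤ T) (hδ : 0 < δ) (hc : 0 < c) (j : ι)
    (h : c + δ * ∑ i, v i ≤ ∑ i, v i * (m i - l i) + T * v j) :
    1 + ∑ i, v i + |∑ i, v i * l i| ≤
      (1 + (M + T + 1) / δ + 1 / c) * (∑ i, v i * (m i - l i) + T * v j) := by
  have hM : 0 ≤ M := (abs_nonneg _).trans (hm j)
  have hδS : 0 ≤ δ * ∑ i, v i := mul_nonneg hδ.le (Finset.sum_nonneg fun i _ => hv i)
  have habs := abs_sum_mul_le_add_mul_sum hv hm hT j (by linarith)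
  set W := ∑ i, v i * (m i - l i) + T * v j
  have hS : ∑ i, v i ≤ W / δ := (le_div_iff₀' hδ).2 (by linarith)
  have hone : 1 ≤ W / c := (one_le_div hc).2 (by linarith)
  calc 1 + ∑ i, v i + |∑ i, v i * l i| ≤ W + (M + T + 1) * ∑ i, v i + 1 := by linarith
    _ ≤ W + (M + T + 1) * (W / δ) + W / c := by gcongr
    _ = (1 + (M + T + 1) / δ + 1 / c) * W := by ring

theorem exists_pos_forall_supergradient_dichotomy {s : Set (EuclideanSpace ℝ ι)}
    {f : EuclideanSpace ℝ ι → ℝ} {σ : ℝ} {μ : EuclideanSpace ℝ ι} {δ R : ℝ}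
    (hopen : IsOpen {x ∈ s | σ < f x}) (hclosed : IsClosed {x ∈ s | σ ≤ f x})
    (hne : {x ∈ s | σ < f x}.Nonempty) (habsorbs : AbsorbsOrthant {x ∈ s | σ < f x}) (hδ : 0 < δ)
    (hbound : ∀ x ∈ s, f x = σ → (∀ i, μ i - 2 * δ < x i) → x ∈ Metric.ball 0 R) :
    ∃ ε > 0, ∀ l : EuclideanSpace ℝ ι, f l = σ →
      ∀ v, (∀ i, 0 ≤ v i) → IsSupergradient f s l v →
        ε * (1 + ∑ i, v i + |∑ i, v i * l i|) ≤ ∑ i, v i * (μ i - l i) ∨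
        ∀ i, ε * (1 + ∑ j, v j + |∑ j, v j * l j|) ≤ v i := by
  classical
  set T : ℝ := |R| + ‖μ‖ + δ
  have hX : ∀ j, testPoint μ δ T j ∈ {x ∈ s | σ < f x} :=
    testPoint_mem_of_level_subset_ball hopen hclosed (fun x hx => ⟨hx.1, hx.2.le⟩) hne habsorbs hδ
      (by positivity) (by linarith [le_abs_self R]) fun x ⟨hxK, hxU⟩ =>
        hbound x hxK.1 (le_antisymm (not_lt.1 fun hlt => hxU ⟨hxK.1, hlt⟩) hxK.2)
  obtain ⟨b, hσb, hbX⟩ : ∃ b, σ < b ∧ ∀ j, b < f (testPoint μ δ T j) := by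
    simpa using Order.exists_between_finsets {σ}
      (Finset.univ.image fun j => f (testPoint μ δ T j)) (by simpa using fun j => (hX j).2)
  have hc : 0 < b - σ := sub_pos.2 hσb
  set C : ℝ := 1 + (‖μ‖ + T + 1) / δ + 1 / (b - σ)
  refine ⟨1 / (C * (1 + T)), by positivity, fun l hl v hv hsup => ?_⟩
  refine le_or_forall_le_of_forall_le_mul (by positivity) (by positivity) fun j => ?_
  refine one_add_sum_add_abs_sum_le hv (PiLp.norm_apply_le μ) (by positivity) hδ hc j ?_
  linarith [hsup _ (hX j).1, hbX j, sum_mul_testPoint_sub (μ := μ) (δ := δ) (T := T) l v j]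

end Dichotomy

theorem stmt0_general {n : ℕ} {Γ : Set (EuclideanSpace ℝ (Fin n))}
    {f : EuclideanSpace ℝ (Fin n) → ℝ} {σ : ℝ} {μ : EuclideanSpace ℝ (Fin n)} {δ R : ℝ}
    (hΓopen : IsOpen Γ) (hΓabsorbs : AbsorbsOrthant Γ) (hdiff : DifferentiableOn ℝ f Γ)
    (hnonneg : ∀ x ∈ Γ, ∀ i, 0 ≤ fpartial f i x) (hconc : ConcaveOn ℝ Γ f)
    (hclosed : IsClosed {x ∈ Γ | σ ≤ f x}) (hne : {x ∈ Γ | σ < f x}.Nonempty) (hδ : 0 < δ)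
    (hbound : ∀ x ∈ Γ, f x = σ → (∀ i, μ i - 2 * δ < x i) → x ∈ Metric.ball 0 R) :
    ∃ ε > (0 : ℝ), ∀ lam ∈ Γ, f lam = σ →
      (∑ i, fpartial f i lam * (μ i - lam i) ≥
        ε * (1 + ∑ i, fpartial f i lam + |∑ i, fpartial f i lam * lam i|)) ∨
      (∀ i, fpartial f i lam ≥
        ε * (1 + ∑ j, fpartial f j lam + |∑ j, fpartial f j lam * lam j|)) := by
  have hsup : ∀ x ∈ Γ, IsSupergradient f Γ x fun i => fpartial f i x := fun x hx =>
    isSupergradient_fpartial hconc hx (hdiff.differentiableAt (hΓopen.mem_nhds hx))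
  have hopen : IsOpen {x ∈ Γ | σ < f x} :=
    hdiff.continuousOn.isOpen_inter_preimage hΓopen isOpen_Ioi
  have habsorbs : AbsorbsOrthant {x ∈ Γ | σ < f x} :=
    absorbsOrthant_superlevel hΓabsorbs (fun x hx => ⟨_, hnonneg x hx, hsup x hx⟩) σ
  obtain ⟨ε, hε, hdich⟩ :=
    exists_pos_forall_supergradient_dichotomy hopen hclosed hne habsorbs hδ hbound
  exact ⟨ε, hε, fun l hl hfl => hdich l hfl _ (hnonneg l hl) (hsup l hl)⟩

/-- Lemma 3.1 (key lemma for subsolutions): under ellipticity and concavity, for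
`sup_{∂Γ} f < σ < sup_Γ f` and `μ` such that `(μ - 2δ·𝟙 + Γₙ) ∩ ∂Γ^σ ⊆ B_R(0)`, there is
`ε > 0` such that every `λ ∈ ∂Γ^σ` satisfies one of the two stated inequalities. -/
theorem stmt0 {n : ℕ} (Γ : Set (EuclideanSpace ℝ (Fin n)))
    (f : EuclideanSpace ℝ (Fin n) → ℝ)
    (hΓopen : IsOpen Γ) (hΓconv : Convex ℝ Γ)
    (hΓcone : ∀ x ∈ Γ, ∀ t : ℝ, 0 < t → t • x ∈ Γ)
    (hΓsymm : ∀ e : Equiv.Perm (Fin n), ∀ x ∈ Γ, WithLp.toLp 2 (fun i => x (e i)) ∈ Γ)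
    (hΓbdry : (frontier Γ).Nonempty)
    (hΓpos : {x : EuclideanSpace ℝ (Fin n) | ∀ i, 0 < x i} ⊆ Γ)
    (hfsmooth : ContDiffOn ℝ (⊤ : ℕ∞) f Γ)
    (hfsymm : ∀ e : Equiv.Perm (Fin n), ∀ x ∈ Γ, f (WithLp.toLp 2 (fun i => x (e i))) = f x)
    (hellip : ∀ x ∈ Γ, ∀ i, 0 < fpartial f i x)
    (hconc : ConcaveOn ℝ Γ f)
    (σ : ℝ)
    (hσlow : (⨆ x ∈ frontier Γ,
        Filter.limsup (fun y => ((f y : ℝ) : EReal)) (nhdsWithin x Γ)) < (σ : EReal))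
    (hσhigh : (σ : EReal) < ⨆ x ∈ Γ, ((f x : ℝ) : EReal))
    (μ : EuclideanSpace ℝ (Fin n)) (δ R : ℝ) (hδ : 0 < δ) (hR : 0 < R)
    (hbound : ∀ x : EuclideanSpace ℝ (Fin n), x ∈ Γ → f x = σ →
      (∀ i, μ i - 2 * δ < x i) → x ∈ Metric.ball (0 : EuclideanSpace ℝ (Fin n)) R) :
    ∃ ε > (0 : ℝ), ∀ lam ∈ Γ, f lam = σ →
      (∑ i, fpartial f i lam * (μ i - lam i) ≥
        ε * (1 + ∑ i, fpartial f i lam + |∑ i, fpartial f i lam * lam i|)) ∨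
      (∀ i, fpartial f i lam ≥
        ε * (1 + ∑ j, fpartial f j lam + |∑ j, fpartial f j lam * lam j|)) := by
  exact stmt0_general hΓopen (absorbsOrthant_of_convex_cone hΓconv hΓcone hΓpos)
    (hfsmooth.differentiableOn (by simp)) (fun x hx i => (hellip x hx i).le) hconc
    (isClosed_superlevel_of_iSup_limsup_lt hfsmooth.continuousOn hσlow)
    (superlevel_nonempty_of_lt_iSup hσhigh) hδ hbound
end

section
/- Assume f is concave on Γ and satisfies the unbounded condition: for every λ = (λ₁,…,λₙ) ∈ Γ, f(λ₁,…,λ_{n−1},λₙ + t) → +∞ as t → +∞. Then f satisfies the ellipticity condition: f_i(λ) > 0 for every λ ∈ Γ and every 1 ≤ i ≤ n. -/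
/-!
A point `x` of the open set `Γ` lies strictly between some `y ∈ Γ` and any given point `p`. If `f`
is concave and tends to `+∞` on the half-line `p + t • v`, comparing `f` along the segments from
`y` to the points `p + t • v` shows that `f` exceeds `f x` somewhere on `x + t • v`, `t > 0`; since
`f` lies below its tangents, its derivative at `x` in the direction `v` is positive. Permuting
coordinates turns a half-line in one coordinate direction into one in any other.
-/

open Filter Topology

section Module

variable {E : Type*} [AddCommGroup E] [Module ℝ E] {s : Set E} {f : E → ℝ} {f' : ℝ} {x v : E}

lemma le_add_mul_of_concaveOn_of_hasLineDerivAt {t : ℝ} (hf : ConcaveOn ℝ s f)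
    (hx : x ∈ s) (hxt : x + t • v ∈ s) (hf' : HasLineDerivAt ℝ f f' x v) :
    f (x + t • v) ≤ f x + t * f' := by
  have hline (r : ℝ) : AffineMap.lineMap x (x + v) r = x + r • v := by
    simp [AffineMap.lineMap_apply, add_comm]
  have hconc : ConcaveOn ℝ ((fun r : ℝ ↦ x + r • v) ⁻¹' s) (fun r ↦ f (x + r • v)) := by
    simpa only [← hline] using! hf.comp_affineMap (AffineMap.lineMap x (x + v))
  have hx₀ : x + (0 : ℝ) • v ∈ s := by simpa using hx
  rcases lt_trichotomy t 0 with ht | rfl | ht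
  · have hslope := hconc.le_slope_of_hasDerivAt hxt hx₀ ht hf'
    rw [slope_def_field, zero_sub, le_div_iff₀ (neg_pos.2 ht), zero_smul, add_zero] at hslope
    linarith
  · simp
  · have hslope := hconc.slope_le_of_hasDerivAt hx₀ hxt ht hf'
    rw [slope_def_field, sub_zero, div_le_iff₀ ht, zero_smul, add_zero] at hslope
    linarith

end Module

section TopologicalVectorSpace

variable {E : Type*} [AddCommGroup E] [Module ℝ E] [TopologicalSpace E] [IsTopologicalAddGroup E]
  [ContinuousSMul ℝ E] {s : Set E} {f : E → ℝ} {x p v : E}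

lemma exists_mem_openSegment_of_mem_interior (hx : x ∈ interior s) (p : E) :
    ∃ y ∈ s, x ∈ openSegment ℝ y p := by
  have hs : ∀ᶠ δ : ℝ in 𝓝[>] 1, AffineMap.homothety p δ x ∈ s :=
    (eventually_homothety_mem_of_mem_interior ℝ p hx).filter_mono nhdsWithin_le_nhds
  obtain ⟨δ, hy, hδ : 1 < δ⟩ := (hs.and self_mem_nhdsWithin).exists
  have hδ₀ : 0 < δ := one_pos.trans hδ
  refine ⟨_, hy, δ⁻¹, 1 - δ⁻¹, inv_pos.2 hδ₀, sub_pos.2 (inv_lt_one_of_one_lt₀ hδ),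
    add_sub_cancel _ _, ?_⟩
  rw [AffineMap.homothety_apply, vsub_eq_sub, vadd_eq_add, smul_add, inv_smul_smul₀ hδ₀.ne']
  module

lemma exists_lt_add_smul_of_concaveOn_of_tendsto_atTop (hf : ConcaveOn ℝ s f)
    (hx : x ∈ interior s) (hp : ∀ᶠ t : ℝ in atTop, p + t • v ∈ s)
    (hlim : Tendsto (fun t : ℝ ↦ f (p + t • v)) atTop atTop) :
    ∃ t : ℝ, 0 < t ∧ x + t • v ∈ s ∧ f x < f (x + t • v) := by
  obtain ⟨y, hy, a, b, ha, hb, hab, hxyp⟩ := exists_mem_openSegment_of_mem_interior hx p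
  obtain ⟨t, ht, hpt, hlarge⟩ := ((eventually_gt_atTop 0).and
    (hp.and (hlim.eventually_gt_atTop ((f x - a * f y) / b)))).exists
  have hcomb : a • y + b • (p + t • v) = x + (b * t) • v := by
    rw [← hxyp]
    module
  refine ⟨b * t, mul_pos hb ht, hcomb ▸ hf.1 hy hpt ha.le hb.le hab, ?_⟩
  calc
    f x < a • f y + b • f (p + t • v) := by
      rw [div_lt_iff₀ hb] at hlarge
      simp only [smul_eq_mul]
      linarith
    _ ≤ f (a • y + b • (p + t • v)) := hf.2 hy hpt ha.le hb.le hab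
    _ = f (x + (b * t) • v) := by rw [hcomb]

lemma hasLineDerivAt_pos_of_concaveOn_of_tendsto_atTop {f' : ℝ} (hf : ConcaveOn ℝ s f)
    (hx : x ∈ interior s) (hp : ∀ᶠ t : ℝ in atTop, p + t • v ∈ s)
    (hlim : Tendsto (fun t : ℝ ↦ f (p + t • v)) atTop atTop) (hf' : HasLineDerivAt ℝ f f' x v) :
    0 < f' := by
  obtain ⟨t, ht, hxt, hlt⟩ := exists_lt_add_smul_of_concaveOn_of_tendsto_atTop hf hx hp hlim
  have htangent :=
    le_add_mul_of_concaveOn_of_hasLineDerivAt hf (interior_subset hx) hxt hf'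
  exact pos_of_mul_pos_right (by linarith) ht.le

end TopologicalVectorSpace

section Coordinates

variable {ι : Type*} [DecidableEq ι]

lemma toLp_add_smul_single_comp_equiv (e : Equiv.Perm ι) (p : EuclideanSpace ℝ ι) (t : ℝ) (i : ι) :
    WithLp.toLp 2 (fun j ↦ (p + t • EuclideanSpace.single i (1 : ℝ)) (e j)) =
      WithLp.toLp 2 (fun j ↦ p (e j)) + t • EuclideanSpace.single (e.symm i) 1 := by
  ext j
  simp [Equiv.eq_symm_apply]

lemma add_smul_single_apply_pos {p : EuclideanSpace ℝ ι} (hp : ∀ j, 0 < p j) {t : ℝ} (ht : 0 ≤ t)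
    (i j : ι) : 0 < (p + t • EuclideanSpace.single i (1 : ℝ)) j := by
  have hsingle : 0 ≤ (EuclideanSpace.single i (1 : ℝ)) j := by
    rw [PiLp.single_apply]
    split_ifs <;> simp
  exact add_pos_of_pos_of_nonneg (hp j) (mul_nonneg ht hsingle)

theorem stmt1_general [Finite ι] {Γ : Set (EuclideanSpace ℝ ι)} {f : EuclideanSpace ℝ ι → ℝ}
    (hΓopen : IsOpen Γ)
    (hΓsymm : ∀ e : Equiv.Perm ι, ∀ x ∈ Γ, WithLp.toLp 2 (fun i ↦ x (e i)) ∈ Γ)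
    (hfdiff : DifferentiableOn ℝ f Γ)
    (hfsymm : ∀ e : Equiv.Perm ι, ∀ x ∈ Γ, f (WithLp.toLp 2 (fun i ↦ x (e i))) = f x)
    (hconc : ConcaveOn ℝ Γ f) {p : EuclideanSpace ℝ ι} {k : ι}
    (hp : ∀ᶠ t : ℝ in atTop, p + t • EuclideanSpace.single k 1 ∈ Γ)
    (hlim : Tendsto (fun t : ℝ ↦ f (p + t • EuclideanSpace.single k 1)) atTop atTop) :
    ∀ x ∈ Γ, ∀ i, 0 < fderiv ℝ f x (EuclideanSpace.single i 1) := by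
  intro x hx i
  have := Fintype.ofFinite ι
  have hperm (t : ℝ) := toLp_add_smul_single_comp_equiv (Equiv.swap i k) p t k
  simp only [Equiv.symm_swap, Equiv.swap_apply_right] at hperm
  have hderiv := (hfdiff.differentiableAt (hΓopen.mem_nhds hx)).hasFDerivAt.hasLineDerivAt
    (EuclideanSpace.single i 1)
  refine hasLineDerivAt_pos_of_concaveOn_of_tendsto_atTop hconc
    (p := WithLp.toLp 2 fun j ↦ p (Equiv.swap i k j)) (hΓopen.interior_eq.symm ▸ hx) ?_ ?_ hderiv
  · filter_upwards [hp] with t ht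
    exact hperm t ▸ hΓsymm _ _ ht
  · refine hlim.congr' ?_
    filter_upwards [hp] with t ht
    rw [← hperm, hfsymm _ _ ht]

end Coordinates

/-- Lemma: concavity together with the unbounded condition
`f(λ₁,…,λ_{n-1},λ_n+t) → +∞ as t → +∞` implies the ellipticity condition `f_i > 0` on `Γ`. -/
theorem stmt1 {n : ℕ} (Γ : Set (EuclideanSpace ℝ (Fin (n + 1))))
    (f : EuclideanSpace ℝ (Fin (n + 1)) → ℝ)
    (hΓopen : IsOpen Γ) (hΓconv : Convex ℝ Γ)
    (hΓcone : ∀ x ∈ Γ, ∀ t : ℝ, 0 < t → t • x ∈ Γ)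
    (hΓsymm : ∀ e : Equiv.Perm (Fin (n + 1)), ∀ x ∈ Γ, WithLp.toLp 2 (fun i => x (e i)) ∈ Γ)
    (hΓbdry : (frontier Γ).Nonempty)
    (hΓpos : {x : EuclideanSpace ℝ (Fin (n + 1)) | ∀ i, 0 < x i} ⊆ Γ)
    (hfsmooth : ContDiffOn ℝ (⊤ : ℕ∞) f Γ)
    (hfsymm : ∀ e : Equiv.Perm (Fin (n + 1)), ∀ x ∈ Γ, f (WithLp.toLp 2 (fun i => x (e i))) = f x)
    (hconc : ConcaveOn ℝ Γ f)
    (hunbounded : ∀ lam ∈ Γ,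
      Tendsto (fun t : ℝ => f (lam + t • EuclideanSpace.single (Fin.last n) 1)) atTop atTop) :
    ∀ lam ∈ Γ, ∀ i, 0 < fpartial f i lam := by
  have hone : ∀ j, 0 < (WithLp.toLp 2 1 : EuclideanSpace ℝ (Fin (n + 1))) j := fun _ ↦ one_pos
  exact stmt1_general hΓopen hΓsymm (hfsmooth.differentiableOn (by simp)) hfsymm hconc
    ((eventually_ge_atTop 0).mono fun _ ht ↦ hΓpos (add_smul_single_apply_pos hone ht _))
    (hunbounded _ (hΓpos hone))
end

section
/- Assume f is concave on Γ. Then for every λ ∈ Γ and every μ ∈ Γ_G^f, one has λ + μ ∈ Γ and f(λ + μ) ≥ f(λ). -/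
open Filter Topology

/-- The cone `Γ_G^f = {λ ∈ Γ : f(tλ) stays bounded below as t → +∞}`. -/
def GammaG {n : ℕ} (Γ : Set (EuclideanSpace ℝ (Fin n)))
    (f : EuclideanSpace ℝ (Fin n) → ℝ) : Set (EuclideanSpace ℝ (Fin n)) :=
  {x ∈ Γ | ∃ C : ℝ, ∀ᶠ t : ℝ in atTop, C ≤ f (t • x)}

/-!
Suppose `f (x + v) < f x`. A concave function on a half-line that decreases somewhere eventually
lies below a line of negative slope, so `f (x + t • v) → -∞` as `t → +∞`. Since `x + t • v` is the
midpoint of `2 • x` and `(2 * t) • v`, concavity then forces `f (t • v) → -∞` as well, which is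
impossible if `f` stays bounded below along the ray through `v`.
-/

section OrderedField

variable {𝕜 : Type*} [Field 𝕜] [LinearOrder 𝕜] [IsStrictOrderedRing 𝕜]

theorem tendsto_atBot_of_concaveOn_Ici_of_lt {g : 𝕜 → 𝕜} {a x y : 𝕜}
    (hg : ConcaveOn 𝕜 (Set.Ici a) g) (hx : a ≤ x) (hxy : x < y) (hlt : g y < g x) :
    Tendsto g atTop atBot := by
  set m := (g y - g x) / (y - x)
  have hm : m < 0 := div_neg_of_neg_of_pos (sub_neg.2 hlt) (sub_pos.2 hxy)
  have below_chord : ∀ᶠ z in atTop, g z ≤ g y + m * (z - y) := by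
    filter_upwards [eventually_gt_atTop y] with z hyz
    have hslope : (g z - g y) / (z - y) ≤ m :=
      hg.slope_anti_adjacent hx (hx.trans (hxy.trans hyz).le) hxy hyz
    rwa [div_le_iff₀ (sub_pos.2 hyz), sub_le_iff_le_add'] at hslope
  have chord_atBot : Tendsto (fun z ↦ g y + m * (z - y)) atTop atBot := by
    have hsub : Tendsto (fun z ↦ z - y) atTop atTop := by
      simpa only [sub_eq_add_neg, id_eq] using tendsto_atTop_add_const_right _ (-y) tendsto_id
    exact tendsto_atBot_add_const_left _ _ (hsub.const_mul_atTop_of_neg hm)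
  exact tendsto_atBot_mono' _ below_chord chord_atBot

end OrderedField

section ConvexCone

variable {𝕜 E : Type*} [Field 𝕜] [LinearOrder 𝕜] [AddCommGroup E] [Module 𝕜 E]
  {Γ : Set E} {x v : E}

theorem concaveOn_comp_add_smul {β : Type*} [AddCommMonoid β] [PartialOrder β] [SMul 𝕜 β]
    {f : E → β} {s : Set 𝕜} (hs : Convex 𝕜 s) (hf : ConcaveOn 𝕜 Γ f)
    (hmem : ∀ t ∈ s, x + t • v ∈ Γ) : ConcaveOn 𝕜 s fun t ↦ f (x + t • v) := by
  have hline (t : 𝕜) : AffineMap.lineMap x (x + v) t = x + t • v := by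
    rw [AffineMap.lineMap_apply_module', add_sub_cancel_left, add_comm]
  have hcomp := hf.comp_affineMap (AffineMap.lineMap x (x + v))
  simp only [Function.comp_def, hline] at hcomp
  exact hcomp.subset (fun t ht ↦ by simpa only [Set.mem_preimage, hline] using hmem t ht) hs

variable [IsStrictOrderedRing 𝕜] {f : E → 𝕜}

theorem add_mem_of_convex_of_smul_mem (hΓconv : Convex 𝕜 Γ)
    (hΓcone : ∀ x ∈ Γ, ∀ t : 𝕜, 0 < t → t • x ∈ Γ) (hx : x ∈ Γ) (hv : v ∈ Γ) : x + v ∈ Γ := by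
  have hmem : x + v ∈ ConvexCone.hull 𝕜 Γ :=
    add_mem (ConvexCone.subset_hull hx) (ConvexCone.subset_hull hv)
  obtain ⟨c, hc, y, hy, hcy⟩ := (ConvexCone.mem_hull_of_convex hΓconv).1 hmem
  exact hcy ▸ hΓcone y hy c hc

theorem add_smul_mem_of_convex_of_smul_mem (hΓconv : Convex 𝕜 Γ)
    (hΓcone : ∀ x ∈ Γ, ∀ t : 𝕜, 0 < t → t • x ∈ Γ) (hx : x ∈ Γ) (hv : v ∈ Γ) {t : 𝕜}
    (ht : 0 ≤ t) : x + t • v ∈ Γ := by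
  obtain rfl | ht := ht.eq_or_lt
  · simpa only [zero_smul, add_zero] using hx
  · exact add_mem_of_convex_of_smul_mem hΓconv hΓcone hx (hΓcone v hv t ht)

theorem two_smul_add_two_smul_le_of_concaveOn (hf : ConcaveOn 𝕜 Γ f) (hx : (2 : 𝕜) • x ∈ Γ)
    (hv : (2 : 𝕜) • v ∈ Γ) : f ((2 : 𝕜) • x) + f ((2 : 𝕜) • v) ≤ 2 * f (x + v) := by
  have hmid := hf.2 hx hv (inv_nonneg.2 zero_le_two) (inv_nonneg.2 zero_le_two)
    (by norm_num : (2 : 𝕜)⁻¹ + 2⁻¹ = 1)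
  simp only [inv_smul_smul₀ (two_ne_zero' 𝕜), smul_eq_mul] at hmid
  linarith

theorem tendsto_smul_atBot_of_tendsto_add_smul_atBot
    (hΓcone : ∀ x ∈ Γ, ∀ t : 𝕜, 0 < t → t • x ∈ Γ) (hf : ConcaveOn 𝕜 Γ f)
    (hx : x ∈ Γ) (hv : v ∈ Γ) (h : Tendsto (fun t : 𝕜 ↦ f (x + t • v)) atTop atBot) :
    Tendsto (fun t : 𝕜 ↦ f (t • v)) atTop atBot := by
  have upper_bound : ∀ᶠ t : 𝕜 in atTop,
      f (t • v) ≤ 2 * f (x + (t / 2) • v) + -f ((2 : 𝕜) • x) := by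
    filter_upwards [eventually_gt_atTop 0] with t ht
    have htwo : (2 : 𝕜) • (t / 2) • v = t • v := by
      rw [smul_smul, mul_div_cancel₀ t two_ne_zero]
    have hmid := two_smul_add_two_smul_le_of_concaveOn hf (hΓcone x hx 2 two_pos)
      (v := (t / 2) • v) (htwo ▸ hΓcone v hv t ht)
    rw [htwo] at hmid
    linarith
  have upper_atBot : Tendsto (fun t : 𝕜 ↦ 2 * f (x + (t / 2) • v) + -f ((2 : 𝕜) • x))
      atTop atBot :=
    tendsto_atBot_add_const_right _ _
      ((h.comp (tendsto_id.atTop_div_const two_pos)).const_mul_atBot two_pos)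
  exact tendsto_atBot_mono' _ upper_bound upper_atBot

theorem stmt4_general (hΓcone : ∀ x ∈ Γ, ∀ t : 𝕜, 0 < t → t • x ∈ Γ) (hf : ConcaveOn 𝕜 Γ f)
    (hx : x ∈ Γ) (hv : v ∈ Γ) (hlim : ¬Tendsto (fun t : 𝕜 ↦ f (t • v)) atTop atBot) :
    x + v ∈ Γ ∧ f x ≤ f (x + v) := by
  refine ⟨add_mem_of_convex_of_smul_mem hf.1 hΓcone hx hv, ?_⟩
  by_contra! hlt
  have ray_concave : ConcaveOn 𝕜 (Set.Ici (0 : 𝕜)) fun t ↦ f (x + t • v) :=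
    concaveOn_comp_add_smul (convex_Ici 0) hf fun _ ht ↦
      add_smul_mem_of_convex_of_smul_mem hf.1 hΓcone hx hv ht
  have ray_atBot : Tendsto (fun t : 𝕜 ↦ f (x + t • v)) atTop atBot :=
    tendsto_atBot_of_concaveOn_Ici_of_lt ray_concave le_rfl zero_lt_one
      (by simpa only [one_smul, zero_smul, add_zero] using hlt)
  exact hlim (tendsto_smul_atBot_of_tendsto_add_smul_atBot hΓcone hf hx hv ray_atBot)

end ConvexCone

/-- Lemma 3.5: if `f` is concave on `Γ`, then for every `λ ∈ Γ` and every `μ ∈ Γ_G^f`,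
one has `λ + μ ∈ Γ` and `f(λ + μ) ≥ f(λ)`. -/
theorem stmt4 {n : ℕ} (Γ : Set (EuclideanSpace ℝ (Fin n)))
    (f : EuclideanSpace ℝ (Fin n) → ℝ)
    (hΓopen : IsOpen Γ) (hΓconv : Convex ℝ Γ)
    (hΓcone : ∀ x ∈ Γ, ∀ t : ℝ, 0 < t → t • x ∈ Γ)
    (hΓsymm : ∀ e : Equiv.Perm (Fin n), ∀ x ∈ Γ, WithLp.toLp 2 (fun i => x (e i)) ∈ Γ)
    (hΓbdry : (frontier Γ).Nonempty)
    (hΓpos : {x : EuclideanSpace ℝ (Fin n) | ∀ i, 0 < x i} ⊆ Γ)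
    (hfsmooth : ContDiffOn ℝ (⊤ : ℕ∞) f Γ)
    (hfsymm : ∀ e : Equiv.Perm (Fin n), ∀ x ∈ Γ, f (WithLp.toLp 2 (fun i => x (e i))) = f x)
    (hconc : ConcaveOn ℝ Γ f) :
    ∀ lam ∈ Γ, ∀ μ ∈ GammaG Γ f, lam + μ ∈ Γ ∧ f lam ≤ f (lam + μ) := by
  intro lam hlam μ ⟨hμ, C, hC⟩
  exact stmt4_general hΓcone hconc hlam hμ fun h ↦ not_isBoundedUnder_of_tendsto_atBot h ⟨C, hC⟩
end

section
/- Assume f is concave on Γ and fix μ ∈ Γ. Then the following are mutually equivalent: (1) μ ∈ Γ_G^f, i.e. f(tμ) stays bounded below as t → +∞; (2) limsup_{t→+∞} f(tμ)/t ≥ 0; (3) Σ_{i=1}^n f_i(λ)μ_i ≥ 0 for every λ ∈ Γ; (4) f(λ + μ) ≥ f(λ) for every λ ∈ Γ. -/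
open Filter Topology

/-!
A concave function lies below its tangent lines. Write `f' x` for the derivative of `f` at `x` in
direction `μ`. Midpoint concavity in the cone converts the tangent line at `x` into an affine bound
`f (t • μ) ≤ c + t * f' x` with `c` independent of `t`, so the asymptotic slope of `f` along the
ray of `μ` is at most every `f' x`. If all `f' x` are nonnegative, the tangent line at `x + t • μ`,
followed backwards to `x`, shows `f x ≤ f (x + t • μ)`; conversely
`f x ≤ f (x + μ) ≤ f x + f' x` forces `0 ≤ f' x`.
-/

section LimsupDiv

theorem tendsto_affine_div_atTop (a b : ℝ) :
    Tendsto (fun t : ℝ => (((a + t * b) / t : ℝ) : EReal)) atTop (𝓝 (b : EReal)) := by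
  have hlim : Tendsto (fun t : ℝ => a / t + b) atTop (𝓝 b) := by
    simpa only [id, zero_add] using (tendsto_id.const_div_atTop a).add_const b
  refine (continuous_coe_real_ereal.tendsto b).comp (hlim.congr' ?_)
  filter_upwards [eventually_gt_atTop 0] with t ht
  rw [add_div, mul_div_cancel_left₀ b ht.ne']

variable {g h : ℝ → ℝ} {a b : ℝ}

theorem limsup_div_le_limsup_div (hgh : ∀ᶠ t in atTop, g t ≤ h t) :
    limsup (fun t : ℝ => ((g t / t : ℝ) : EReal)) atTop ≤
      limsup (fun t : ℝ => ((h t / t : ℝ) : EReal)) atTop := by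
  refine limsup_le_limsup ?_
  filter_upwards [hgh, eventually_gt_atTop 0] with t hle ht
  exact EReal.coe_le_coe (div_le_div_of_nonneg_right hle ht.le)

theorem le_limsup_div_of_eventually_affine_le (hg : ∀ᶠ t in atTop, a + t * b ≤ g t) :
    (b : EReal) ≤ limsup (fun t : ℝ => ((g t / t : ℝ) : EReal)) atTop :=
  (tendsto_affine_div_atTop a b).limsup_eq.ge.trans (limsup_div_le_limsup_div hg)

theorem limsup_div_le_of_eventually_le_affine (hg : ∀ᶠ t in atTop, g t ≤ a + t * b) :
    limsup (fun t : ℝ => ((g t / t : ℝ) : EReal)) atTop ≤ b :=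
  (limsup_div_le_limsup_div hg).trans (tendsto_affine_div_atTop a b).limsup_eq.le

end LimsupDiv

section ConcaveLineDeriv

variable {E : Type*} [AddCommGroup E] [Module ℝ E] {S : Set E} {f : E → ℝ} {x v : E} {f' t : ℝ}

theorem map_add_le_of_concaveOn_of_hasLineDerivAt (hf : ConcaveOn ℝ S f) (hx : x ∈ S)
    (hxv : x + v ∈ S) (hf' : HasLineDerivAt ℝ f f' x v) : f (x + v) ≤ f x + f' := by
  let line : ℝ →ᵃ[ℝ] E := AffineMap.lineMap x (x + v)
  have hline (s : ℝ) : line s = x + s • v := by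
    simp only [line, AffineMap.lineMap_apply_module', add_sub_cancel_left, add_comm]
  have hderiv : HasDerivAt (f ∘ line) f' 0 := by
    simpa only [Function.comp_def, hline, HasLineDerivAt] using hf'
  have hslope : slope (f ∘ line) 0 1 ≤ f' :=
    (hf.comp_affineMap line).slope_le_of_hasDerivAt (by simpa [hline] using hx)
      (by simpa [hline] using hxv) one_pos hderiv
  simp only [slope_def_field, Function.comp_apply, hline, one_smul, zero_smul, add_zero, sub_zero,
    div_one] at hslope
  linarith

theorem le_map_add_smul_of_concaveOn_of_lineDeriv_nonneg (hf : ConcaveOn ℝ S f) (hx : x ∈ S)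
    (hxv : x + t • v ∈ S) (ht : 0 ≤ t) (hderiv : HasLineDerivAt ℝ f f' (x + t • v) v)
    (hf' : 0 ≤ f') : f x ≤ f (x + t • v) := by
  have htangent : f (x + t • v + -t • v) ≤ f (x + t • v) + -t • f' :=
    map_add_le_of_concaveOn_of_hasLineDerivAt hf hxv (by simpa using hx) (hderiv.smul (-t))
  rw [neg_smul, add_neg_cancel_right, neg_smul, smul_eq_mul] at htangent
  linarith [mul_nonneg ht hf']

end ConcaveLineDeriv

section Cone

variable {E : Type*} [AddCommGroup E] [Module ℝ E] {Γ : Set E} {f : E → ℝ} {x μ : E}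

theorem add_mem_of_convex_of_smul_mem_s5 (hconv : Convex ℝ Γ)
    (hcone : ∀ x ∈ Γ, ∀ t : ℝ, 0 < t → t • x ∈ Γ) {y : E} (hx : x ∈ Γ) (hy : y ∈ Γ) :
    x + y ∈ Γ := by
  simpa [smul_smul] using hconv (hcone x hx 2 two_pos) (hcone y hy 2 two_pos)
    (half_pos one_pos).le (half_pos one_pos).le (add_halves 1)

theorem map_smul_le_affine_of_concaveOn_cone (hf : ConcaveOn ℝ Γ f)
    (hcone : ∀ x ∈ Γ, ∀ t : ℝ, 0 < t → t • x ∈ Γ) (hx : x ∈ Γ) (hμ : μ ∈ Γ) {f' t : ℝ}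
    (hf' : HasLineDerivAt ℝ f f' x μ) (ht : 0 < t) :
    f (t • μ) ≤ (2 * f x - f ((2 : ℝ) • x)) + t * f' := by
  have hmidpoint : (1 / 2 : ℝ) • (2 : ℝ) • x + (1 / 2 : ℝ) • t • μ = x + (t / 2) • μ := by
    module
  have hconcave : 1 / 2 * f ((2 : ℝ) • x) + 1 / 2 * f (t • μ) ≤ f (x + (t / 2) • μ) := by
    simpa only [hmidpoint, smul_eq_mul] using
      hf.2 (hcone x hx 2 two_pos) (hcone μ hμ t ht) (half_pos one_pos).le (half_pos one_pos).le
        (add_halves 1)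
  have htangent : f (x + (t / 2) • μ) ≤ f x + (t / 2) * f' :=
    map_add_le_of_concaveOn_of_hasLineDerivAt hf hx
      (add_mem_of_convex_of_smul_mem_s5 hf.1 hcone hx (hcone μ hμ _ (half_pos ht)))
      (hf'.smul (t / 2))
  linarith

theorem stmt5_general {f' : E → ℝ} (hcone : ∀ x ∈ Γ, ∀ t : ℝ, 0 < t → t • x ∈ Γ)
    (hf : ConcaveOn ℝ Γ f) (hμ : μ ∈ Γ) (hf' : ∀ x ∈ Γ, HasLineDerivAt ℝ f (f' x) x μ) :
    [(∃ C : ℝ, ∀ᶠ t : ℝ in atTop, C ≤ f (t • μ)),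
     ((0 : EReal) ≤ limsup (fun t : ℝ => ((f (t • μ) / t : ℝ) : EReal)) atTop),
     (∀ x ∈ Γ, 0 ≤ f' x),
     (∀ x ∈ Γ, f x ≤ f (x + μ))].TFAE := by
  have hadd {x : E} (hx : x ∈ Γ) {t : ℝ} (ht : 0 < t) : x + t • μ ∈ Γ :=
    add_mem_of_convex_of_smul_mem_s5 hf.1 hcone hx (hcone μ hμ t ht)
  have hmono (hnonneg : ∀ x ∈ Γ, 0 ≤ f' x) {x : E} (hx : x ∈ Γ) {t : ℝ} (ht : 0 < t) :
      f x ≤ f (x + t • μ) :=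
    le_map_add_smul_of_concaveOn_of_lineDeriv_nonneg hf hx (hadd hx ht) ht.le
      (hf' _ (hadd hx ht)) (hnonneg _ (hadd hx ht))
  tfae_have 1 → 2 := fun ⟨C, hC⟩ =>
    le_limsup_div_of_eventually_affine_le (a := C) (b := 0) (by simpa only [mul_zero, add_zero])
  tfae_have 2 → 3 := fun hlimsup x hx =>
    EReal.coe_nonneg.1 <| hlimsup.trans <| limsup_div_le_of_eventually_le_affine <|
      (eventually_gt_atTop 0).mono fun t =>
        map_smul_le_affine_of_concaveOn_cone hf hcone hx hμ (hf' x hx)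
  tfae_have 3 → 1 := by
    refine fun hnonneg => ⟨f μ, (eventually_gt_atTop 1).mono fun t ht => ?_⟩
    have hle : f μ ≤ f (μ + (t - 1) • μ) := hmono hnonneg hμ (sub_pos.2 ht)
    rwa [show μ + (t - 1) • μ = t • μ by module] at hle
  tfae_have 3 → 4 := fun hnonneg x hx => by
    simpa only [one_smul] using hmono hnonneg hx one_pos
  tfae_have 4 → 3 := fun hle x hx => by
    have htangent : f (x + μ) ≤ f x + f' x :=
      map_add_le_of_concaveOn_of_hasLineDerivAt hf hx
        (add_mem_of_convex_of_smul_mem_s5 hf.1 hcone hx hμ) (hf' x hx)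
    linarith [hle x hx]
  tfae_finish

end Cone

theorem hasLineDerivAt_sum_fpartial {n : ℕ} {f : EuclideanSpace ℝ (Fin n) → ℝ}
    {x : EuclideanSpace ℝ (Fin n)} (hf : DifferentiableAt ℝ f x) (v : EuclideanSpace ℝ (Fin n)) :
    HasLineDerivAt ℝ f (∑ i, fpartial f i x * v i) x v := by
  have hv : v = ∑ i, v i • EuclideanSpace.single i (1 : ℝ) := by
    simpa using ((EuclideanSpace.basisFun (Fin n) ℝ).sum_repr v).symm
  have hsum : fderiv ℝ f x v = ∑ i, fpartial f i x * v i := by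
    conv_lhs => rw [hv]
    simp only [map_sum, map_smul, smul_eq_mul, fpartial, mul_comm]
  exact hsum ▸ hf.hasFDerivAt.hasLineDerivAt v

/-- Lemma 3.6 (criteria for the cone `Γ_G^f`): for `f` concave on `Γ` and `μ ∈ Γ` fixed, the
following are mutually equivalent:
(1) `f(tμ)` stays bounded below as `t → +∞` (i.e. `μ ∈ Γ_G^f`);
(2) `limsup_{t→+∞} f(tμ)/t ≥ 0`;
(3) `Σ_i f_i(λ) μ_i ≥ 0` for every `λ ∈ Γ`;
(4) `f(λ + μ) ≥ f(λ)` for every `λ ∈ Γ`. -/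
theorem stmt5 {n : ℕ} (Γ : Set (EuclideanSpace ℝ (Fin n)))
    (f : EuclideanSpace ℝ (Fin n) → ℝ)
    (hΓopen : IsOpen Γ) (hΓconv : Convex ℝ Γ)
    (hΓcone : ∀ x ∈ Γ, ∀ t : ℝ, 0 < t → t • x ∈ Γ)
    (hΓsymm : ∀ e : Equiv.Perm (Fin n), ∀ x ∈ Γ, (WithLp.toLp 2 (fun i => x (e i)) : EuclideanSpace ℝ (Fin n)) ∈ Γ)
    (hΓbdry : (frontier Γ).Nonempty)
    (hΓpos : {x : EuclideanSpace ℝ (Fin n) | ∀ i, 0 < x i} ⊆ Γ)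
    (hfsmooth : ContDiffOn ℝ (⊤ : ℕ∞) f Γ)
    (hfsymm : ∀ e : Equiv.Perm (Fin n), ∀ x ∈ Γ, f (WithLp.toLp 2 (fun i => x (e i))) = f x)
    (hconc : ConcaveOn ℝ Γ f)
    (μ : EuclideanSpace ℝ (Fin n)) (hμ : μ ∈ Γ) :
    [(∃ C : ℝ, ∀ᶠ t : ℝ in atTop, C ≤ f (t • μ)),
     ((0 : EReal) ≤ Filter.limsup (fun t : ℝ => ((f (t • μ) / t : ℝ) : EReal)) atTop),
     (∀ lam ∈ Γ, 0 ≤ ∑ i, fpartial f i lam * μ i),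
     (∀ lam ∈ Γ, f lam ≤ f (lam + μ))].TFAE :=
  stmt5_general hΓcone hconc hμ fun x hx =>
    hasLineDerivAt_sum_fpartial ((hfsmooth.contDiffAt (hΓopen.mem_nhds hx)).differentiableAt
      (by simp)) μ
end

section
/- Assume f satisfies the ellipticity condition (f_i(λ) > 0 on Γ for all i) and the concavity condition. Then the following are mutually equivalent: (1) for all λ, μ ∈ Γ, liminf_{t→+∞} f(tλ) > f(μ); (2) Γ_G^f = Γ, i.e. for every λ ∈ Γ the function f(tλ) stays bounded below as t → +∞; (3) for every λ ∈ Γ, limsup_{t→+∞} f(tλ)/t ≥ 0; (4) f(λ + μ) > f(λ) for all λ, μ ∈ Γ; (5) Σ_{i=1}^n f_i(λ)μ_i > 0 for all λ, μ ∈ Γ. -/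
open Filter Topology

/-!
The gradient `L` of a concave function at `x` supports it, `f y ≤ f x + L (y - x)`, and ellipticity
makes it nonzero. Along a ray of the cone, `f (t • μ) ≤ f x + L (t • μ - x)`, so `L μ` dominates
`limsup f (t • μ) / t`. Under (3) the functional `L` is therefore nonnegative on the cone; being
nonzero, it is positive there because the cone is open, which is (5). The same inequality with `L`
supporting `f` at `λ + μ` turns (5) into (4). Finally, `t • λ - 2 • μ` lies in the open cone for
large `t`, so (4) gives `f (t • λ) > f (2 • μ) > f μ` for all large `t`, hence (1).
-/

section LinearGrowth

theorem tendsto_coe_add_mul_div_atTop (a b : ℝ) :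
    Tendsto (fun t : ℝ => (((a + b * t) / t : ℝ) : EReal)) atTop (𝓝 (b : EReal)) := by
  have hlim : Tendsto (fun t : ℝ => a / t + b) atTop (𝓝 b) := by
    simpa using (tendsto_const_nhds.div_atTop tendsto_id).add_const b
  refine (continuous_coe_real_ereal.tendsto b).comp (hlim.congr' ?_)
  filter_upwards [eventually_ne_atTop 0] with t ht
  field_simp

variable {φ : ℝ → ℝ} {a b : ℝ}

theorem limsup_coe_div_le_of_eventually_le (h : ∀ᶠ t in atTop, φ t ≤ a + b * t) :
    limsup (fun t : ℝ => ((φ t / t : ℝ) : EReal)) atTop ≤ b := by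
  rw [← (tendsto_coe_add_mul_div_atTop a b).limsup_eq]
  refine limsup_le_limsup ?_
  filter_upwards [h, eventually_gt_atTop 0] with t hφ ht
  exact EReal.coe_le_coe (by gcongr)

theorem le_limsup_coe_div_of_eventually_le (h : ∀ᶠ t in atTop, a + b * t ≤ φ t) :
    (b : EReal) ≤ limsup (fun t : ℝ => ((φ t / t : ℝ) : EReal)) atTop := by
  rw [← (tendsto_coe_add_mul_div_atTop a b).limsup_eq]
  refine limsup_le_limsup ?_
  filter_upwards [h, eventually_gt_atTop 0] with t hφ ht
  exact EReal.coe_le_coe (by gcongr)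

end LinearGrowth

/-- `L` is a supergradient of `f` at `x` relative to `s`: the affine function through `(x, f x)`
with linear part `L` lies above `f` on `s`. It plays the role of the gradient for concave functions
that need not be differentiable. -/
def IsSupergradientOn {E : Type*} [AddCommGroup E] [Module ℝ E] [TopologicalSpace E]
    (f : E → ℝ) (L : E →L[ℝ] ℝ) (s : Set E) (x : E) : Prop :=
  ∀ y ∈ s, f y ≤ f x + L (y - x)

theorem IsSupergradientOn.of_concaveOn {E : Type*} [NormedAddCommGroup E] [NormedSpace ℝ E]
    {s : Set E} {f : E → ℝ} {L : E →L[ℝ] ℝ} {x : E} (hf : ConcaveOn ℝ s f) (hx : x ∈ s)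
    (hL : HasFDerivWithinAt f L s x) : IsSupergradientOn f L s x := by
  intro y hy
  let γ : ℝ →ᵃ[ℝ] E := AffineMap.lineMap x y
  have hderiv : HasDerivWithinAt (f ∘ γ) (L (y - x)) (γ ⁻¹' s) 0 :=
    hL.comp_hasDerivWithinAt_of_eq 0 AffineMap.hasDerivWithinAt_lineMap
      (Set.mapsTo_preimage γ s) (by simp [γ])
  have hslope : slope (f ∘ γ) 0 1 ≤ L (y - x) :=
    (hf.comp_affineMap γ).slope_le_of_hasDerivWithinAt (by simpa [γ] using hx)
      (by simpa [γ] using hy) one_pos hderiv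
  have hslope_eq : slope (f ∘ γ) 0 1 = f y - f x := by simp [slope_def_field, γ]
  linarith

section TopologicalVectorSpace

variable {E : Type*} [AddCommGroup E] [Module ℝ E] [TopologicalSpace E]
  {C : ConvexCone ℝ E} {f : E → ℝ}

theorem IsSupergradientOn.limsup_div_le {L : E →L[ℝ] ℝ} {x y : E}
    (hL : IsSupergradientOn f L C x) (hy : y ∈ C) :
    limsup (fun t : ℝ => ((f (t • y) / t : ℝ) : EReal)) atTop ≤ L y := by
  refine limsup_coe_div_le_of_eventually_le (a := f x - L x) ?_
  filter_upwards [eventually_gt_atTop 0] with t ht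
  have hray := hL (t • y) (C.smul_mem ht hy)
  rw [map_sub, map_smul, smul_eq_mul] at hray
  linarith

variable [IsTopologicalAddGroup E] [ContinuousSMul ℝ E]

theorem pos_of_forall_nonneg_of_isOpen {s : Set E} (hs : IsOpen s) {L : E →L[ℝ] ℝ} (hL : L ≠ 0)
    (h : ∀ x ∈ s, 0 ≤ L x) {x : E} (hx : x ∈ s) : 0 < L x := by
  have himage : L '' s ⊆ interior (Set.Ici 0) :=
    interior_maximal (Set.image_subset_iff.2 h) (L.isOpenMap_of_ne_zero hL s hs)
  rw [interior_Ici] at himage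
  exact himage (Set.mem_image_of_mem L hx)

theorem eventually_smul_sub_mem (hC : IsOpen (C : Set E)) {x : E} (hx : x ∈ C) (y : E) :
    ∀ᶠ t : ℝ in atTop, t • x - y ∈ C := by
  have hlim : Tendsto (fun t : ℝ => x - t⁻¹ • y) atTop (𝓝 x) := by
    simpa using ((tendsto_inv_atTop_zero (𝕜 := ℝ)).smul_const y).const_sub x
  filter_upwards [hlim.eventually_mem (hC.mem_nhds hx), eventually_gt_atTop 0] with t hmem ht
  simpa [smul_sub, smul_smul, ht.ne'] using C.smul_mem ht hmem

theorem lt_liminf_of_lt_add (hC : IsOpen (C : Set E)) (hf : ∀ x ∈ C, ∀ y ∈ C, f x < f (x + y))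
    {x y : E} (hx : x ∈ C) (hy : y ∈ C) :
    (f y : EReal) < liminf (fun t : ℝ => (f (t • x) : EReal)) atTop := by
  have hdouble : (f y : EReal) < f (y + y) := EReal.coe_lt_coe (hf y hy y hy)
  refine hdouble.trans_le (le_liminf_of_le (by isBoundedDefault) ?_)
  filter_upwards [eventually_smul_sub_mem hC hx (y + y)] with t ht
  have hlt := hf (y + y) (C.add_mem hy hy) _ ht
  rw [add_sub_cancel] at hlt
  exact EReal.coe_le_coe hlt.le

theorem stmt6_general {f' : E → E →L[ℝ] ℝ} (hC : IsOpen (C : Set E))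
    (hf' : ∀ x ∈ C, IsSupergradientOn f (f' x) C x) (hf'_ne : ∀ x ∈ C, f' x ≠ 0) :
    [(∀ x ∈ C, ∀ y ∈ C, (f y : EReal) < liminf (fun t : ℝ => (f (t • x) : EReal)) atTop),
     (∀ x ∈ C, ∃ c : ℝ, ∀ᶠ t : ℝ in atTop, c ≤ f (t • x)),
     (∀ x ∈ C, (0 : EReal) ≤ limsup (fun t : ℝ => ((f (t • x) / t : ℝ) : EReal)) atTop),
     (∀ x ∈ C, ∀ y ∈ C, f x < f (x + y)),
     (∀ x ∈ C, ∀ y ∈ C, 0 < f' x y)].TFAE := by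
  tfae_have 1 → 2 := fun h x hx =>
    ⟨f x, (eventually_lt_of_lt_liminf (h x hx x hx)).mono fun _ ht =>
      (EReal.coe_lt_coe_iff.1 ht).le⟩
  tfae_have 2 → 3 := by
    intro h x hx
    obtain ⟨c, hc⟩ := h x hx
    exact le_limsup_coe_div_of_eventually_le (a := c) (b := 0) (by simpa using hc)
  tfae_have 3 → 5 := by
    intro h x hx y hy
    have hnonneg : ∀ z ∈ C, 0 ≤ f' x z := fun z hz =>
      EReal.coe_nonneg.1 ((h z hz).trans ((hf' x hx).limsup_div_le hz))
    exact pos_of_forall_nonneg_of_isOpen hC (hf'_ne x hx) hnonneg hy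
  tfae_have 5 → 4 := by
    intro h x hx y hy
    have hxy : x + y ∈ C := C.add_mem hx hy
    have hsupport : f x ≤ f (x + y) - f' (x + y) y := by
      simpa [sub_eq_add_neg] using hf' (x + y) hxy x hx
    linarith [h (x + y) hxy y hy]
  tfae_have 4 → 1 := fun h x hx y hy => lt_liminf_of_lt_add hC h hx hy
  tfae_finish

end TopologicalVectorSpace

theorem exists_convexCone_coe_eq {𝕜 E : Type*} [Field 𝕜] [LinearOrder 𝕜] [IsStrictOrderedRing 𝕜]
    [AddCommGroup E] [Module 𝕜 E] {s : Set E} (hconv : Convex 𝕜 s)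
    (hsmul : ∀ x ∈ s, ∀ t : 𝕜, 0 < t → t • x ∈ s) : ∃ C : ConvexCone 𝕜 E, (C : Set E) = s := by
  refine ⟨ConvexCone.hull 𝕜 s, Set.Subset.antisymm (fun x hx => ?_) ConvexCone.subset_hull⟩
  obtain ⟨t, ht, y, hy, rfl⟩ := (ConvexCone.mem_hull_of_convex hconv).1 hx
  exact hsmul y hy t ht

theorem nonempty_of_frontier_nonempty {ι : Type*} {s : Set (EuclideanSpace ℝ ι)}
    (h : (frontier s).Nonempty) : Nonempty ι := by
  by_contra hι
  have : IsEmpty ι := not_nonempty_iff.1 hι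
  exact h.ne_empty (isClopen_discrete s).frontier_eq

theorem sum_fpartial_mul {n : ℕ} (f : EuclideanSpace ℝ (Fin n) → ℝ)
    (x v : EuclideanSpace ℝ (Fin n)) : ∑ i, fpartial f i x * v i = fderiv ℝ f x v := by
  conv_rhs => rw [← (EuclideanSpace.basisFun (Fin n) ℝ).sum_repr v]
  simp [fpartial, mul_comm]

theorem fderiv_ne_zero_of_fpartial_ne_zero {n : ℕ} {f : EuclideanSpace ℝ (Fin n) → ℝ} {i : Fin n}
    {x : EuclideanSpace ℝ (Fin n)} (h : fpartial f i x ≠ 0) : fderiv ℝ f x ≠ 0 :=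
  fun h0 => h (by rw [fpartial, h0, zero_apply])

/-- Lemma 3.7: under ellipticity and concavity, the following are mutually equivalent:
(1) `liminf_{t→+∞} f(tλ) > f(μ)` for all `λ, μ ∈ Γ`;
(2) `Γ_G^f = Γ`, i.e. for every `λ ∈ Γ`, `f(tλ)` stays bounded below as `t → +∞`;
(3) `limsup_{t→+∞} f(tλ)/t ≥ 0` for every `λ ∈ Γ`;
(4) `f(λ + μ) > f(λ)` for all `λ, μ ∈ Γ`;
(5) `Σ_i f_i(λ) μ_i > 0` for all `λ, μ ∈ Γ`. -/
theorem stmt6 {n : ℕ} (Γ : Set (EuclideanSpace ℝ (Fin n)))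
    (f : EuclideanSpace ℝ (Fin n) → ℝ)
    (hΓopen : IsOpen Γ) (hΓconv : Convex ℝ Γ)
    (hΓcone : ∀ x ∈ Γ, ∀ t : ℝ, 0 < t → t • x ∈ Γ)
    (hΓsymm : ∀ e : Equiv.Perm (Fin n), ∀ x ∈ Γ, WithLp.toLp 2 (fun i => x (e i)) ∈ Γ)
    (hΓbdry : (frontier Γ).Nonempty)
    (hΓpos : {x : EuclideanSpace ℝ (Fin n) | ∀ i, 0 < x i} ⊆ Γ)
    (hfsmooth : ContDiffOn ℝ (⊤ : ℕ∞) f Γ)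
    (hfsymm : ∀ e : Equiv.Perm (Fin n), ∀ x ∈ Γ, f (WithLp.toLp 2 (fun i => x (e i))) = f x)
    (hellip : ∀ x ∈ Γ, ∀ i, 0 < fpartial f i x)
    (hconc : ConcaveOn ℝ Γ f) :
    [(∀ lam ∈ Γ, ∀ μ ∈ Γ, ((f μ : ℝ) : EReal) <
        Filter.liminf (fun t : ℝ => ((f (t • lam) : ℝ) : EReal)) atTop),
     (∀ lam ∈ Γ, ∃ C : ℝ, ∀ᶠ t : ℝ in atTop, C ≤ f (t • lam)),
     (∀ lam ∈ Γ, (0 : EReal) ≤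
        Filter.limsup (fun t : ℝ => ((f (t • lam) / t : ℝ) : EReal)) atTop),
     (∀ lam ∈ Γ, ∀ μ ∈ Γ, f lam < f (lam + μ)),
     (∀ lam ∈ Γ, ∀ μ ∈ Γ, 0 < ∑ i, fpartial f i lam * μ i)].TFAE := by
  obtain ⟨C, rfl⟩ := exists_convexCone_coe_eq hΓconv hΓcone
  obtain ⟨i⟩ := nonempty_of_frontier_nonempty hΓbdry
  have hdiff : ∀ x ∈ C, DifferentiableAt ℝ f x := fun x hx =>
    (hfsmooth.differentiableOn (by simp)).differentiableAt (hΓopen.mem_nhds hx)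
  have hsupport : ∀ x ∈ C, IsSupergradientOn f (fderiv ℝ f x) C x := fun x hx =>
    .of_concaveOn hconc hx (hdiff x hx).hasFDerivAt.hasFDerivWithinAt
  have hfderiv_ne : ∀ x ∈ C, fderiv ℝ f x ≠ 0 := fun x hx =>
    fderiv_ne_zero_of_fpartial_ne_zero (hellip x hx i).ne'
  simpa only [sum_fpartial_mul, SetLike.mem_coe] using
    stmt6_general hΓopen hsupport hfderiv_ne
end

section
/- Let ε > 0 be fixed. Suppose the parameter 𝐚 of the arrow matrix A satisfies the quadratic growth condition 𝐚 ≥ ((2n−3)/ε)·Σ_{α=1}^{n−1}|a_α|² + (n−1)·Σ_{α=1}^{n−1}|d_α| + (n−2)ε/(2n−3). Then the n eigenvalues of A (counted with multiplicity) can be enumerated as λ₁, …, λₙ in such a way that d_α − ε < λ_α < d_α + ε for every 1 ≤ α ≤ n−1, and 𝐚 ≤ λₙ < 𝐚 + (n−1)ε. -/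
open Filter

/-- The `(n+1) × (n+1)` Hermitian "arrow" matrix with diagonal `d₁, …, dₙ, 𝐚`, last column
`a₁, …, aₙ` and last row `conj a₁, …, conj aₙ`. -/
noncomputable def arrowMatrix {n : ℕ} (d : Fin n → ℝ) (a : Fin n → ℂ) (aa : ℝ) :
    Matrix (Fin (n + 1)) (Fin (n + 1)) ℂ :=
  Matrix.of fun i j =>
    Fin.lastCases
      (Fin.lastCases ((aa : ℂ)) (fun β => (starRingEnd ℂ) (a β)) j)
      (fun α => Fin.lastCases (a α) (fun β => if α = β then (d α : ℂ) else 0) j)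
      i

/-!
Restricted to vectors with vanishing last coordinate, the quadratic form of the arrow matrix is
`∑ d_α |x_α|²`, so by the Courant–Fischer principle at least as many eigenvalues as entries `d_α`
lie below any given level; Hall's theorem turns this into an enumeration with `λ_α ≤ d_α`. An
eigenvalue `μ` exceeding every `d_α` solves the secular equation `μ - 𝐚 = ∑ |a_α|² / (μ - d_α)`,
which the growth condition rules out for `μ ≥ 𝐚 + ε`. Comparing traces,
`∑ (d_α - λ_α) = λₙ - 𝐚 < ε`, and since no summand is negative each of them is less than `ε`.
-/

section DiagonalCompression

variable {𝕜 E ι κ : Type*} [RCLike 𝕜] [NormedAddCommGroup E] [InnerProductSpace 𝕜 E]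
  [Fintype ι] [Fintype κ]

lemma re_inner_sum_map_sum_of_inner_map_eq_ite [DecidableEq κ] {T : E →ₗ[𝕜] E} {w : κ → E}
    {d : κ → ℝ} (hT : ∀ α β, inner 𝕜 (w α) (T (w β)) = if α = β then (d α : 𝕜) else 0)
    (c : κ → 𝕜) :
    RCLike.re (inner 𝕜 (∑ α, c α • w α) (T (∑ α, c α • w α))) = ∑ α, d α * ‖c α‖ ^ 2 := by
  simp only [map_sum, map_smul, sum_inner, inner_sum, inner_smul_left, inner_smul_right, hT,
    mul_ite, mul_zero, Finset.sum_ite_eq', Finset.mem_univ, if_true]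
  refine Finset.sum_congr rfl fun α _ => ?_
  rw [← mul_assoc, RCLike.mul_conj, mul_comm, ← RCLike.ofReal_pow, ← RCLike.ofReal_mul,
    RCLike.ofReal_re]

lemma re_inner_map_self_eq_sum_eigenvalues (b : OrthonormalBasis ι 𝕜 E) {T : E →ₗ[𝕜] E}
    {μ : ι → ℝ} (hT : ∀ i, T (b i) = (μ i : 𝕜) • b i) (x : E) :
    RCLike.re (inner 𝕜 x (T x)) = ∑ i, μ i * ‖inner 𝕜 (b i) x‖ ^ 2 := by
  classical
  have hdiag : ∀ i j, inner 𝕜 (b i) (T (b j)) = if i = j then (μ i : 𝕜) else 0 := by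
    intro i j
    rw [hT, inner_smul_right, b.inner_eq_ite]
    split_ifs with hij <;> simp [hij]
  conv_lhs => rw [← b.sum_repr' x]
  exact re_inner_sum_map_sum_of_inner_map_eq_ite hdiag _

-- Half of the Courant–Fischer principle: `V` meets the span of the eigenvectors with `c < μ i`
-- only in zero.
lemma finrank_le_card_eigenvalues_le (b : OrthonormalBasis ι 𝕜 E) {T : E →ₗ[𝕜] E}
    {μ : ι → ℝ} (hT : ∀ i, T (b i) = (μ i : 𝕜) • b i) {V : Submodule 𝕜 E} {c : ℝ}
    (hV : ∀ x ∈ V, RCLike.re (inner 𝕜 x (T x)) ≤ c * ‖x‖ ^ 2) :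
    Module.finrank 𝕜 V ≤ Fintype.card {i // μ i ≤ c} := by
  let coords : V →ₗ[𝕜] ({i // μ i ≤ c} → 𝕜) :=
    LinearMap.pi fun i => (innerₛₗ 𝕜 (b i)).comp V.subtype
  have hcoords : Function.Injective coords := by
    refine (injective_iff_map_eq_zero coords).2 fun x hx => Subtype.ext ?_
    have hlow : ∀ i, μ i ≤ c → inner 𝕜 (b i) (x : E) = 0 := fun i hi => congrFun hx ⟨i, hi⟩
    have hnonneg : ∀ i, 0 ≤ (μ i - c) * ‖inner 𝕜 (b i) (x : E)‖ ^ 2 := by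
      intro i
      rcases le_or_gt (μ i) c with hi | hi
      · simp [hlow i hi]
      · exact mul_nonneg (sub_nonneg.2 hi.le) (sq_nonneg _)
    have hsum : ∑ i, (μ i - c) * ‖inner 𝕜 (b i) (x : E)‖ ^ 2 = 0 := by
      refine le_antisymm ?_ (Finset.sum_nonneg fun i _ => hnonneg i)
      have hx := hV x x.2
      rw [re_inner_map_self_eq_sum_eigenvalues b hT, ← b.sum_sq_norm_inner_right,
        Finset.mul_sum] at hx
      simpa only [sub_mul, Finset.sum_sub_distrib, sub_nonpos] using hx
    refine InnerProductSpace.ext_inner_left_basis b.toBasis fun i => ?_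
    rw [b.coe_toBasis, ZeroMemClass.coe_zero, inner_zero_right]
    rcases le_or_gt (μ i) c with hi | hi
    · exact hlow i hi
    · have hterm := (Finset.sum_eq_zero_iff_of_nonneg fun i _ => hnonneg i).1 hsum i
        (Finset.mem_univ i)
      simpa [sub_ne_zero.2 hi.ne'] using hterm
  simpa using LinearMap.finrank_le_finrank_of_injective hcoords

lemma card_diagonal_le_card_eigenvalues_le [DecidableEq κ] (b : OrthonormalBasis ι 𝕜 E)
    {T : E →ₗ[𝕜] E} {μ : ι → ℝ} (hT : ∀ i, T (b i) = (μ i : 𝕜) • b i) {w : κ → E}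
    (hw : Orthonormal 𝕜 w) {d : κ → ℝ}
    (hd : ∀ α β, inner 𝕜 (w α) (T (w β)) = if α = β then (d α : 𝕜) else 0) (c : ℝ) :
    Fintype.card {α // d α ≤ c} ≤ Fintype.card {i // μ i ≤ c} := by
  let v : {α // d α ≤ c} → E := fun α => w α
  have hv : Orthonormal 𝕜 v := hw.comp _ Subtype.val_injective
  rw [← finrank_span_eq_card hv.linearIndependent]
  refine finrank_le_card_eigenvalues_le b hT fun x hx => ?_
  obtain ⟨y, rfl⟩ := (Submodule.mem_span_range_iff_exists_fun 𝕜).1 hx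
  have hvd : ∀ α β, inner 𝕜 (v α) (T (v β)) = if α = β then ((d α : ℝ) : 𝕜) else 0 :=
    fun α β => by simp only [v, hd, Subtype.ext_iff]
  have hnorm : ‖∑ α, y α • v α‖ ^ 2 = ∑ α, ‖y α‖ ^ 2 := by
    rw [← inner_self_eq_norm_sq (𝕜 := 𝕜), hv.inner_sum, map_sum]
    simp only [RCLike.conj_mul, ← RCLike.ofReal_pow, RCLike.ofReal_re]
  rw [re_inner_sum_map_sum_of_inner_map_eq_ite hvd, hnorm, Finset.mul_sum]
  exact Finset.sum_le_sum fun α _ => mul_le_mul_of_nonneg_right α.2 (sq_nonneg _)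

end DiagonalCompression

lemma exists_injective_le_of_card_le {ι κ R : Type*} [Fintype ι] [Fintype κ] [LinearOrder R]
    {u : κ → R} {v : ι → R}
    (h : ∀ c, Fintype.card {α // u α ≤ c} ≤ Fintype.card {i // v i ≤ c}) :
    ∃ f : κ → ι, Function.Injective f ∧ ∀ α, v (f α) ≤ u α := by
  classical
  refine (Fintype.all_card_le_filter_rel_iff_exists_injective fun α i => v i ≤ u α).1 fun S => ?_
  rcases S.eq_empty_or_nonempty with rfl | hS
  · simp
  obtain ⟨β, hβ, hmax⟩ := S.exists_max_image u hS
  calc S.card ≤ Fintype.card {α // u α ≤ u β} := by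
        rw [Fintype.card_subtype]
        exact Finset.card_le_card fun α hα => by simpa using hmax α hα
    _ ≤ Fintype.card {i // v i ≤ u β} := h _
    _ ≤ _ := by
        rw [Fintype.card_subtype]
        exact Finset.card_le_card fun i hi => by simpa using ⟨β, hβ, by simpa using hi⟩

lemma exists_perm_castSucc_eq {n : ℕ} {f : Fin n → Fin (n + 1)} (hf : Function.Injective f) :
    ∃ σ : Equiv.Perm (Fin (n + 1)), ∀ α : Fin n, σ α.castSucc = f α := by
  have hsurj : ¬ Function.Surjective f := fun h => by
    simpa using Fintype.card_le_of_surjective f h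
  obtain ⟨p, hp⟩ := not_forall.1 hsurj
  have hbij : Function.Bijective (Fin.snoc f p : Fin (n + 1) → Fin (n + 1)) :=
    Finite.injective_iff_bijective.1 (Fin.snoc_injective_of_injective hf hp)
  exact ⟨Equiv.ofBijective _ hbij, fun α => by simp⟩

lemma sum_div_lt_of_sum_lt_mul {κ : Type*} [Fintype κ] {p g : κ → ℝ} {ε : ℝ} (hε : 0 < ε)
    (hp : ∀ α, 0 ≤ p α) (h : ∀ α, ∑ β, p β < ε * g α) : ∑ α, p α / g α < ε := by
  rcases isEmpty_or_nonempty κ with _ | _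
  · simpa using hε
  obtain ⟨β, hβ⟩ := Finite.exists_min g
  have hgβ : 0 < g β :=
    pos_of_mul_pos_right ((Finset.sum_nonneg fun α _ => hp α).trans_lt (h β)) hε.le
  calc ∑ α, p α / g α ≤ ∑ α, p α / g β :=
        Finset.sum_le_sum fun α _ => div_le_div_of_nonneg_left (hp α) hgβ (hβ α)
    _ = (∑ α, p α) / g β := (Finset.sum_div ..).symm
    _ < ε := (div_lt_iff₀ hgβ).2 (h β)

section ArrowMatrix

open Matrix

variable {n : ℕ} {d : Fin n → ℝ} {a : Fin n → ℂ} {aa : ℝ}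

lemma arrowMatrix_castSucc_castSucc (α β : Fin n) :
    arrowMatrix d a aa α.castSucc β.castSucc = if α = β then (d α : ℂ) else 0 := by
  simp [arrowMatrix]

lemma arrowMatrix_mulVec_castSucc (x : Fin (n + 1) → ℂ) (α : Fin n) :
    (arrowMatrix d a aa *ᵥ x) α.castSucc = d α * x α.castSucc + a α * x (Fin.last n) := by
  simp [arrowMatrix, mulVec, dotProduct, Fin.sum_univ_castSucc]

lemma arrowMatrix_mulVec_last (x : Fin (n + 1) → ℂ) :
    (arrowMatrix d a aa *ᵥ x) (Fin.last n) =
      ∑ α, starRingEnd ℂ (a α) * x α.castSucc + aa * x (Fin.last n) := by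
  simp [arrowMatrix, mulVec, dotProduct, Fin.sum_univ_castSucc]

lemma sum_eigenvalues_arrowMatrix (hA : (arrowMatrix d a aa).IsHermitian) :
    ∑ i, hA.eigenvalues i = ∑ α, d α + aa := by
  have htrace : (arrowMatrix d a aa).trace = ((∑ α, d α + aa : ℝ) : ℂ) := by
    simp [trace, Fin.sum_univ_castSucc, arrowMatrix]
  rw [hA.trace_eq_sum_eigenvalues] at htrace
  simpa using congrArg Complex.re htrace

lemma arrowMatrix_secular_equation {x : Fin (n + 1) → ℂ} (hx : x ≠ 0) {μ : ℝ}
    (hμx : arrowMatrix d a aa *ᵥ x = μ • x) (hμ : ∀ α, μ ≠ d α) :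
    ∑ α, ‖a α‖ ^ 2 / (μ - d α) = μ - aa := by
  set z := x (Fin.last n) with hz
  have hμd : ∀ α, (μ - d α : ℂ) ≠ 0 := fun α => by exact_mod_cast sub_ne_zero.2 (hμ α)
  have hcoord : ∀ α : Fin n, x α.castSucc = a α * z / (μ - d α) := by
    intro α
    have hα := congrFun hμx α.castSucc
    rw [arrowMatrix_mulVec_castSucc, Pi.smul_apply, Complex.real_smul, ← hz] at hα
    rw [eq_div_iff (hμd α)]
    linear_combination -hα
  have hz0 : z ≠ 0 := by
    refine fun hz0 => hx (funext fun i => ?_)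
    cases i using Fin.lastCases with
    | last => exact hz0
    | cast α => simp [hcoord, hz0]
  have hlast := congrFun hμx (Fin.last n)
  rw [arrowMatrix_mulVec_last, Pi.smul_apply, Complex.real_smul, ← hz] at hlast
  have hsum : ∑ α, starRingEnd ℂ (a α) * x α.castSucc =
      (∑ α, (‖a α‖ : ℂ) ^ 2 / (μ - d α)) * z := by
    rw [Finset.sum_mul]
    refine Finset.sum_congr rfl fun α _ => ?_
    rw [hcoord, ← Complex.conj_mul']
    ring
  have hsecular : ∑ α, (‖a α‖ : ℂ) ^ 2 / (μ - d α) = μ - aa :=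
    mul_right_cancel₀ hz0 (by linear_combination hlast - hsum)
  exact_mod_cast hsecular

lemma eigenvalues_arrowMatrix_lt (hA : (arrowMatrix d a aa).IsHermitian) {ε : ℝ} (hε : 0 < ε)
    (hgap : ∀ α, ∑ β, ‖a β‖ ^ 2 < ε * (aa + ε - d α)) (i : Fin (n + 1)) :
    hA.eigenvalues i < aa + ε := by
  by_contra! hi
  have hgap' : ∀ α, ∑ β, ‖a β‖ ^ 2 < ε * (hA.eigenvalues i - d α) := fun α =>
    (hgap α).trans_le (by gcongr)
  have hpos : ∀ α, 0 < hA.eigenvalues i - d α := fun α =>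
    pos_of_mul_pos_right ((Finset.sum_nonneg fun β _ => sq_nonneg ‖a β‖).trans_lt (hgap' α)) hε.le
  have hsecular := arrowMatrix_secular_equation
    (by simpa using hA.eigenvectorBasis.orthonormal.ne_zero i) (hA.mulVec_eigenvectorBasis i)
    fun α => (sub_pos.1 (hpos α)).ne'
  linarith [sum_div_lt_of_sum_lt_mul hε (fun α => sq_nonneg ‖a α‖) hgap']

lemma exists_perm_eigenvalues_arrowMatrix_le (hA : (arrowMatrix d a aa).IsHermitian) :
    ∃ σ : Equiv.Perm (Fin (n + 1)), ∀ α : Fin n, hA.eigenvalues (σ α.castSucc) ≤ d α := by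
  let w : Fin n → EuclideanSpace ℂ (Fin (n + 1)) := fun α => EuclideanSpace.single α.castSucc 1
  have hw : Orthonormal ℂ w :=
    EuclideanSpace.orthonormal_single.comp _ (Fin.castSucc_injective n)
  have heig : ∀ i, toEuclideanLin (arrowMatrix d a aa) (hA.eigenvectorBasis i) =
      (hA.eigenvalues i : ℂ) • hA.eigenvectorBasis i := fun i =>
    congrArg (WithLp.toLp 2) (hA.mulVec_eigenvectorBasis i)
  have hd : ∀ α β, inner ℂ (w α) (toEuclideanLin (arrowMatrix d a aa) (w β)) =
      if α = β then (d α : ℂ) else 0 := fun α β => by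
    simp [w, EuclideanSpace.inner_single_left, toLpLin_apply,
      arrowMatrix_castSucc_castSucc]
  obtain ⟨f, hf, hle⟩ := exists_injective_le_of_card_le
    (card_diagonal_le_card_eigenvalues_le hA.eigenvectorBasis heig hw hd)
  obtain ⟨σ, hσ⟩ := exists_perm_castSucc_eq hf
  exact ⟨σ, fun α => hσ α ▸ hle α⟩

lemma sum_norm_sq_lt_of_quadratic_growth {ε : ℝ} (hε : 0 < ε)
    (hgrow : aa ≥ ((2 * ((n : ℝ) + 1) - 3) / ε) * ∑ α, ‖a α‖ ^ 2
        + (((n : ℝ) + 1) - 1) * ∑ α, |d α|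
        + ((((n : ℝ) + 1) - 2) * ε) / (2 * ((n : ℝ) + 1) - 3)) (α : Fin n) :
    ∑ β, ‖a β‖ ^ 2 < ε * (aa + ε - d α) := by
  have hn : (1 : ℝ) ≤ n := by exact_mod_cast α.pos
  have hd : d α ≤ ∑ β, |d β| := (le_abs_self _).trans
    (Finset.single_le_sum (f := fun β => |d β|) (fun β _ => abs_nonneg _) (Finset.mem_univ α))
  have hdn : ∑ β, |d β| ≤ n * ∑ β, |d β| :=
    le_mul_of_one_le_left (Finset.sum_nonneg fun β _ => abs_nonneg _) hn
  have ha : (∑ β, ‖a β‖ ^ 2) / ε ≤ (2 * ((n : ℝ) + 1) - 3) / ε * ∑ β, ‖a β‖ ^ 2 := by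
    rw [div_mul_eq_mul_div]
    gcongr
    exact le_mul_of_one_le_left (Finset.sum_nonneg fun β _ => sq_nonneg _) (by linarith)
  have hrest : 0 ≤ (((n : ℝ) + 1) - 2) * ε / (2 * ((n : ℝ) + 1) - 3) :=
    div_nonneg (mul_nonneg (by linarith) hε.le) (by linarith)
  rw [← div_lt_iff₀' hε]
  linarith

end ArrowMatrix

theorem stmt8_general {n : ℕ} (d : Fin n → ℝ) (a : Fin n → ℂ) (aa : ℝ)
    (hA : (arrowMatrix d a aa).IsHermitian) (ε : ℝ) (hε : 0 < ε)
    (hgap : ∀ α, ∑ β, ‖a β‖ ^ 2 < ε * (aa + ε - d α)) :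
    ∃ σ : Equiv.Perm (Fin (n + 1)),
      (∀ α : Fin n, d α - ε < hA.eigenvalues (σ α.castSucc) ∧
        hA.eigenvalues (σ α.castSucc) ≤ d α) ∧
      aa ≤ hA.eigenvalues (σ (Fin.last n)) ∧
      hA.eigenvalues (σ (Fin.last n)) < aa + ε := by
  obtain ⟨σ, hσ⟩ := exists_perm_eigenvalues_arrowMatrix_le hA
  have hdrop : ∀ α, 0 ≤ d α - hA.eigenvalues (σ α.castSucc) := fun α => sub_nonneg.2 (hσ α)
  have hlast := eigenvalues_arrowMatrix_lt hA hε hgap (σ (Fin.last n))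
  have htrace : ∑ α, (d α - hA.eigenvalues (σ α.castSucc)) =
      hA.eigenvalues (σ (Fin.last n)) - aa := by
    have hsum := sum_eigenvalues_arrowMatrix hA
    rw [← Equiv.sum_comp σ, Fin.sum_univ_castSucc] at hsum
    rw [Finset.sum_sub_distrib]
    linarith
  refine ⟨σ, fun α => ⟨?_, hσ α⟩, ?_, hlast⟩
  · have hle : d α - hA.eigenvalues (σ α.castSucc) ≤ hA.eigenvalues (σ (Fin.last n)) - aa :=
      htrace ▸ Finset.single_le_sum (fun β _ => hdrop β) (Finset.mem_univ α)
    linarith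
  · exact sub_nonneg.1 (htrace ▸ Finset.sum_nonneg fun α _ => hdrop α)

/-- Lemma 3.8 (quantitative lemma): if the corner entry `𝐚` satisfies the quadratic growth
condition, then the eigenvalues of the arrow matrix can be enumerated so that the first `n-1`
lie within `ε` of the corresponding diagonal entries and the last lies in `[𝐚, 𝐚 + (n-1)ε)`.
(Here the matrix has total size `n+1`, so `n-1` of the statement corresponds to `n`.) -/
theorem stmt8 {n : ℕ} (hn : 1 ≤ n) (d : Fin n → ℝ) (a : Fin n → ℂ) (aa : ℝ)
    (hA : (arrowMatrix d a aa).IsHermitian)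
    (ε : ℝ) (hε : 0 < ε)
    (hgrow : aa ≥ ((2 * ((n : ℝ) + 1) - 3) / ε) * ∑ α, ‖a α‖ ^ 2
        + (((n : ℝ) + 1) - 1) * ∑ α, |d α|
        + ((((n : ℝ) + 1) - 2) * ε) / (2 * ((n : ℝ) + 1) - 3)) :
    ∃ σ : Equiv.Perm (Fin (n + 1)),
      (∀ α : Fin n, d α - ε < hA.eigenvalues (σ α.castSucc) ∧
        hA.eigenvalues (σ α.castSucc) < d α + ε) ∧
      aa ≤ hA.eigenvalues (σ (Fin.last n)) ∧
      hA.eigenvalues (σ (Fin.last n)) < aa + (((n : ℝ) + 1) - 1) * ε := by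
  obtain ⟨σ, hσ, hlower, hupper⟩ :=
    stmt8_general d a aa hA ε hε (sum_norm_sq_lt_of_quadratic_growth hε hgrow)
  have hle : ε ≤ ((n : ℝ) + 1 - 1) * ε := le_mul_of_one_le_left hε.le (by simpa using hn)
  exact ⟨σ, fun α => ⟨(hσ α).1, (hσ α).2.trans_lt (by linarith)⟩, hlower, by linarith⟩
end

section
/- Let ε > 0 be fixed and let λ₁ ≤ λ₂ ≤ … ≤ λₙ denote the eigenvalues of the arrow matrix A listed in nondecreasing order. Suppose 𝐚 ≥ (1/ε)·Σ_{i=1}^{n−1}|a_i|² + Σ_{i=1}^{n−1}(d_i + (n−2)|d_i|) + (n−2)ε. Then there is a map α ↦ i_α from {1,…,n−1} to {1,…,n−1} such that |λ_α − d_{i_α}| < ε for every 1 ≤ α ≤ n−1, and moreover 0 ≤ λₙ − 𝐚 < (n−1)ε + |Σ_{α=1}^{n−1}(d_α − d_{i_α})|. -/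
open Filter

/-!
If `x` is an eigenvalue of the arrow matrix other than the `d i`, its eigenvectors are the
multiples of `(a i / (x - d i), …, 1)`, and the last row of the eigenvalue equation becomes the
secular equation `x - 𝐚 = ∑ i, ‖a i‖ ^ 2 / (x - d i)`. Two such eigenvectors, for eigenvalues
`x` and `y` on the same side of every `d i`, have inner product a nonzero multiple of
`1 + ∑ i, ‖a i‖ ^ 2 / ((x - d i) * (y - d i)) > 0`. They are never orthogonal, so at most one
eigenvalue, counted with multiplicity, exceeds all the `d i`. Any other eigenvalue `x` lies below
some `d i`; were it at distance at least `ε` from all of them, the secular equation would give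
`𝐚 ≤ x + (∑ j, ‖a j‖ ^ 2) / ε ≤ d i - ε + (∑ j, ‖a j‖ ^ 2) / ε`. The growth condition forbids
this: when there are at least two diagonal entries `d j`, every term `d j + (n - 1) * |d j|` with
`j ≠ i` is nonnegative. The trace then controls the largest eigenvalue from above, and the last
diagonal entry bounds it from below.
-/

open scoped Matrix

open scoped ComplexOrder MatrixOrder in
theorem re_diag_le_of_eigenvalues_le {𝕜 ι : Type*} [RCLike 𝕜] [Fintype ι] [DecidableEq ι]
    {A : Matrix ι ι 𝕜} (hA : A.IsHermitian) {M : ℝ} (hM : ∀ k, hA.eigenvalues k ≤ M) (j : ι) :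
    RCLike.re (A j j) ≤ M := by
  have hle : A ≤ algebraMap ℝ (Matrix ι ι 𝕜) M := by
    refine le_algebraMap_of_spectrum_le (fun x hx => ?_) hA.isSelfAdjoint
    obtain ⟨k, rfl⟩ := hA.spectrum_real_eq_range_eigenvalues ▸ hx
    exact hM k
  have hdiag : 0 ≤ (algebraMap ℝ (Matrix ι ι 𝕜) M - A) j j := (Matrix.le_iff.mp hle).diag_nonneg
  have hre := (RCLike.nonneg_iff.mp hdiag).1
  simpa [Matrix.algebraMap_matrix_apply] using hre

theorem ofLp_eigenvectorBasis_ne_zero {𝕜 ι : Type*} [RCLike 𝕜] [Fintype ι] [DecidableEq ι]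
    {A : Matrix ι ι 𝕜} (hA : A.IsHermitian) (k : ι) : (hA.eigenvectorBasis k).ofLp ≠ 0 := by
  simpa only [ne_eq, WithLp.ofLp_eq_zero] using hA.eigenvectorBasis.orthonormal.ne_zero k

theorem le_sum_add_card_sub_one_mul_abs {ι : Type*} [Fintype ι] (d : ι → ℝ) (i : ι) :
    d i ≤ ∑ j, (d j + ((Fintype.card ι : ℝ) - 1) * |d j|) := by
  classical
  have hcard : (1 : ℝ) ≤ Fintype.card ι := by exact_mod_cast Fintype.card_pos_iff.mpr ⟨i⟩
  have hi : 0 ≤ ((Fintype.card ι : ℝ) - 1) * |d i| :=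
    mul_nonneg (sub_nonneg.mpr hcard) (abs_nonneg _)
  have hrest : 0 ≤ ∑ j ∈ Finset.univ.erase i, (d j + ((Fintype.card ι : ℝ) - 1) * |d j|) := by
    refine Finset.sum_nonneg fun j hj => ?_
    have htwo : (2 : ℝ) ≤ Fintype.card ι := by
      exact_mod_cast Fintype.one_lt_card_iff.mpr ⟨j, i, Finset.ne_of_mem_erase hj⟩
    have habs : |d j| ≤ ((Fintype.card ι : ℝ) - 1) * |d j| :=
      le_mul_of_one_le_left (abs_nonneg _) (by linarith)
    linarith [neg_abs_le (d j)]
  rw [← Finset.add_sum_erase _ _ (Finset.mem_univ i)]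
  linarith

theorem add_sub_lt_of_add_sum_add_le {ι : Type*} [Fintype ι] {d : ι → ℝ} {ε s b : ℝ} (hε : 0 < ε)
    (hb : s + ∑ j, (d j + ((Fintype.card ι : ℝ) - 1) * |d j|)
      + ((Fintype.card ι : ℝ) - 1) * ε ≤ b) (i : ι) : s + d i - ε < b := by
  have hcard : (0 : ℝ) < Fintype.card ι := by exact_mod_cast Fintype.card_pos_iff.mpr ⟨i⟩
  linarith [le_sum_add_card_sub_one_mul_abs d i, mul_pos hcard hε]

namespace arrowMatrix

variable {n : ℕ} {d : Fin n → ℝ} {a : Fin n → ℂ} {aa : ℝ}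

theorem mulVec_castSucc (v : Fin (n + 1) → ℂ) (i : Fin n) :
    (arrowMatrix d a aa *ᵥ v) i.castSucc = d i * v i.castSucc + a i * v (Fin.last n) := by
  simp [Matrix.mulVec, dotProduct, Fin.sum_univ_castSucc, arrowMatrix]

theorem mulVec_last (v : Fin (n + 1) → ℂ) :
    (arrowMatrix d a aa *ᵥ v) (Fin.last n) =
      ∑ i, (starRingEnd ℂ) (a i) * v i.castSucc + aa * v (Fin.last n) := by
  simp [Matrix.mulVec, dotProduct, Fin.sum_univ_castSucc, arrowMatrix]

theorem trace_eq : (arrowMatrix d a aa).trace = ((∑ i, d i + aa : ℝ) : ℂ) := by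
  simp [Matrix.trace, Fin.sum_univ_castSucc (n := n), arrowMatrix]

section Eigenvector

variable {x y : ℝ} {u v : Fin (n + 1) → ℂ}

theorem eigenvector_castSucc (hv : arrowMatrix d a aa *ᵥ v = x • v) {i : Fin n} (hx : x ≠ d i) :
    v i.castSucc = a i / ((x : ℂ) - d i) * v (Fin.last n) := by
  have hne : (x : ℂ) - d i ≠ 0 := by exact_mod_cast sub_ne_zero.mpr hx
  have hrow := congrFun hv i.castSucc
  rw [mulVec_castSucc, Pi.smul_apply, Complex.real_smul] at hrow
  field_simp
  linear_combination -hrow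

theorem eigenvector_last_ne_zero (hv : arrowMatrix d a aa *ᵥ v = x • v) (hv0 : v ≠ 0)
    (hx : ∀ i, x ≠ d i) : v (Fin.last n) ≠ 0 := by
  intro hlast
  refine hv0 (funext (Fin.lastCases hlast fun i => ?_))
  rw [eigenvector_castSucc hv (hx i), hlast, mul_zero, Pi.zero_apply]

theorem secular_equation (hv : arrowMatrix d a aa *ᵥ v = x • v) (hv0 : v ≠ 0)
    (hx : ∀ i, x ≠ d i) : x - aa = ∑ i, ‖a i‖ ^ 2 / (x - d i) := by
  have hrow := congrFun hv (Fin.last n)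
  rw [mulVec_last, Pi.smul_apply, Complex.real_smul] at hrow
  have hcomplex : ((x : ℂ) - aa) * v (Fin.last n) =
      (∑ i, (‖a i‖ : ℂ) ^ 2 / (x - d i)) * v (Fin.last n) := by
    rw [sub_mul, ← hrow, add_sub_cancel_right, Finset.sum_mul]
    refine Finset.sum_congr rfl fun i _ => ?_
    rw [eigenvector_castSucc hv (hx i), ← Complex.conj_mul']
    ring
  exact_mod_cast mul_right_cancel₀ (eigenvector_last_ne_zero hv hv0 hx) hcomplex

theorem eigenvector_dotProduct_star
    (hu : arrowMatrix d a aa *ᵥ u = x • u) (hv : arrowMatrix d a aa *ᵥ v = y • v)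
    (hx : ∀ i, x ≠ d i) (hy : ∀ i, y ≠ d i) :
    v ⬝ᵥ star u = ((1 + ∑ i, ‖a i‖ ^ 2 / ((x - d i) * (y - d i)) : ℝ) : ℂ) *
      (v (Fin.last n) * star (u (Fin.last n))) := by
  simp only [dotProduct, Fin.sum_univ_castSucc, Pi.star_apply, RCLike.star_def]
  push_cast
  rw [add_mul, one_mul, Finset.sum_mul, add_comm]
  congr 1
  refine Finset.sum_congr rfl fun i _ => ?_
  rw [eigenvector_castSucc hu (hx i), eigenvector_castSucc hv (hy i), ← Complex.mul_conj']
  simp only [map_mul, map_div₀, map_sub, Complex.conj_ofReal]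
  rw [← div_div]
  ring

theorem eigenvector_dotProduct_star_ne_zero
    (hu : arrowMatrix d a aa *ᵥ u = x • u) (hv : arrowMatrix d a aa *ᵥ v = y • v)
    (hu0 : u ≠ 0) (hv0 : v ≠ 0) (hxy : ∀ i, 0 < (x - d i) * (y - d i)) :
    v ⬝ᵥ star u ≠ 0 := by
  have hx (i) : x ≠ d i := sub_ne_zero.mp (left_ne_zero_of_mul (hxy i).ne')
  have hy (i) : y ≠ d i := sub_ne_zero.mp (right_ne_zero_of_mul (hxy i).ne')
  have hsum : 0 ≤ ∑ i, ‖a i‖ ^ 2 / ((x - d i) * (y - d i)) :=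
    Finset.sum_nonneg fun i _ => div_nonneg (sq_nonneg _) (hxy i).le
  rw [eigenvector_dotProduct_star hu hv hx hy]
  refine mul_ne_zero ?_ (mul_ne_zero (eigenvector_last_ne_zero hv hv0 hy)
    (star_ne_zero.mpr (eigenvector_last_ne_zero hu hu0 hx)))
  exact_mod_cast (add_pos_of_pos_of_nonneg one_pos hsum).ne'

theorem sub_le_sum_div_of_le_abs {ε : ℝ} (hε : 0 < ε)
    (hv : arrowMatrix d a aa *ᵥ v = x • v) (hv0 : v ≠ 0) (hfar : ∀ i, ε ≤ |x - d i|) :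
    aa - x ≤ (∑ i, ‖a i‖ ^ 2) / ε := by
  have hx : ∀ i, x ≠ d i := fun i => sub_ne_zero.mp (abs_pos.mp (hε.trans_le (hfar i)))
  calc aa - x ≤ |x - aa| := by rw [abs_sub_comm]; exact le_abs_self _
    _ = |∑ i, ‖a i‖ ^ 2 / (x - d i)| := by rw [secular_equation hv hv0 hx]
    _ ≤ ∑ i, |‖a i‖ ^ 2 / (x - d i)| := Finset.abs_sum_le_sum_abs _ _
    _ = ∑ i, ‖a i‖ ^ 2 / |x - d i| := by simp only [abs_div, abs_pow, abs_norm]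
    _ ≤ ∑ i, ‖a i‖ ^ 2 / ε := by gcongr with i; exact hfar i
    _ = (∑ i, ‖a i‖ ^ 2) / ε := (Finset.sum_div _ _ _).symm

end Eigenvector

section Eigenvalues

variable (hA : (arrowMatrix d a aa).IsHermitian)

theorem subsingleton_setOf_forall_lt_eigenvalues :
    {k | ∀ i, d i < hA.eigenvalues k}.Subsingleton := by
  intro k hk l hl
  by_contra hkl
  refine eigenvector_dotProduct_star_ne_zero
    (hA.mulVec_eigenvectorBasis k) (hA.mulVec_eigenvectorBasis l)
    (ofLp_eigenvectorBasis_ne_zero hA k) (ofLp_eigenvectorBasis_ne_zero hA l)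
    (fun i => mul_pos (sub_pos.mpr (hk i)) (sub_pos.mpr (hl i))) ?_
  rw [← EuclideanSpace.inner_eq_star_dotProduct]
  exact hA.eigenvectorBasis.orthonormal.inner_eq_zero hkl

theorem exists_abs_eigenvalues_sub_lt {ε : ℝ} (hε : 0 < ε)
    (hgrow : ∀ i, (∑ j, ‖a j‖ ^ 2) / ε + d i - ε < aa) {k l : Fin (n + 1)} (hkl : k ≠ l)
    (hle : hA.eigenvalues k ≤ hA.eigenvalues l) : ∃ i, |hA.eigenvalues k - d i| < ε := by
  by_contra! hfar
  have hbound : aa - hA.eigenvalues k ≤ (∑ j, ‖a j‖ ^ 2) / ε :=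
    sub_le_sum_div_of_le_abs hε (hA.mulVec_eigenvectorBasis k)
      (ofLp_eigenvectorBasis_ne_zero hA k) hfar
  obtain ⟨i, hi⟩ : ∃ i, hA.eigenvalues k ≤ d i := by
    by_contra! hgt
    exact hkl (subsingleton_setOf_forall_lt_eigenvalues hA hgt fun i => (hgt i).trans_le hle)
  have hbelow : ε ≤ d i - hA.eigenvalues k := by
    simpa only [abs_sub_comm, abs_of_nonneg (sub_nonneg.mpr hi)] using hfar i
  linarith [hgrow i]

theorem le_of_eigenvalues_le {M : ℝ} (hM : ∀ k, hA.eigenvalues k ≤ M) : aa ≤ M := by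
  simpa [arrowMatrix] using re_diag_le_of_eigenvalues_le hA hM (Fin.last n)

theorem sum_eigenvalues : ∑ k, hA.eigenvalues k = ∑ i, d i + aa := by
  have htrace : (arrowMatrix d a aa).trace = ∑ k, (hA.eigenvalues k : ℂ) :=
    hA.trace_eq_sum_eigenvalues
  rw [trace_eq] at htrace
  exact_mod_cast htrace.symm

end Eigenvalues

end arrowMatrix

theorem stmt9_general {n : ℕ} (hn : 1 ≤ n) (d : Fin n → ℝ) (a : Fin n → ℂ) (aa : ℝ)
    (hA : (arrowMatrix d a aa).IsHermitian)
    (lam : Fin (n + 1) → ℝ) (hmono : Monotone lam)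
    (hperm : ∃ e : Equiv.Perm (Fin (n + 1)), ∀ k, lam k = hA.eigenvalues (e k))
    (ε : ℝ) (hε : 0 < ε) (hgrow : ∀ i, (∑ j, ‖a j‖ ^ 2) / ε + d i - ε < aa) :
    ∃ idx : Fin n → Fin n,
      (∀ α : Fin n, |lam α.castSucc - d (idx α)| < ε) ∧
      0 ≤ lam (Fin.last n) - aa ∧
      lam (Fin.last n) - aa < n * ε + |∑ α, (d α - d (idx α))| := by
  obtain ⟨e, he⟩ := hperm
  have hle_last (k) : hA.eigenvalues k ≤ lam (Fin.last n) := by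
    simpa only [he, e.apply_symm_apply] using hmono (Fin.le_last (e.symm k))
  have hclose (α : Fin n) : ∃ i, |lam α.castSucc - d i| < ε := by
    rw [he]
    exact arrowMatrix.exists_abs_eigenvalues_sub_lt hA hε hgrow
      (e.injective.ne (Fin.castSucc_lt_last α).ne) ((hle_last _).trans_eq (he _))
  choose idx hidx using hclose
  refine ⟨idx, hidx, sub_nonneg.mpr (arrowMatrix.le_of_eigenvalues_le hA hle_last), ?_⟩
  have hsum : ∑ α : Fin n, lam α.castSucc + lam (Fin.last n) = ∑ i, d i + aa := by
    rw [← Fin.sum_univ_castSucc, ← arrowMatrix.sum_eigenvalues hA,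
      ← Equiv.sum_comp e hA.eigenvalues]
    exact Finset.sum_congr rfl fun k _ => he k
  have hdev : ∑ α, (d (idx α) - lam α.castSucc) < n * ε := by
    have : Nonempty (Fin n) := ⟨⟨0, hn⟩⟩
    have hlt : ∑ α, (d (idx α) - lam α.castSucc) < ∑ _α : Fin n, ε :=
      Finset.sum_lt_sum_of_nonempty Finset.univ_nonempty fun α _ => by
        linarith [(abs_lt.mp (hidx α)).1]
    simpa using hlt
  calc lam (Fin.last n) - aa
      = ∑ α, (d (idx α) - lam α.castSucc) + ∑ α, (d α - d (idx α)) := by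
        simp only [Finset.sum_sub_distrib]
        linarith
    _ < n * ε + |∑ α, (d α - d (idx α))| := add_lt_add_of_lt_of_le hdev (le_abs_self _)

/-- Lemma 10.1: if `𝐚` satisfies the stated growth condition, then (with `λ₁ ≤ … ≤ λₙ` the
eigenvalues of the arrow matrix in nondecreasing order) each `λ_α` (α < n) lies within `ε` of
some diagonal entry `d_{i_α}`, and `0 ≤ λₙ − 𝐚 < (n−1)ε + |Σ_α (d_α − d_{i_α})|`.
(Here the matrix has total size `n+1`, so `n-1` of the statement corresponds to `n`.) -/
theorem stmt9 {n : ℕ} (hn : 1 ≤ n) (d : Fin n → ℝ) (a : Fin n → ℂ) (aa : ℝ)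
    (hA : (arrowMatrix d a aa).IsHermitian)
    (lam : Fin (n + 1) → ℝ) (hmono : Monotone lam)
    (hperm : ∃ e : Equiv.Perm (Fin (n + 1)), ∀ k, lam k = hA.eigenvalues (e k))
    (ε : ℝ) (hε : 0 < ε)
    (hgrow : aa ≥ (1 / ε) * ∑ i, ‖a i‖ ^ 2
        + ∑ i, (d i + (((n : ℝ) + 1) - 2) * |d i|)
        + (((n : ℝ) + 1) - 2) * ε) :
    ∃ idx : Fin n → Fin n,
      (∀ α : Fin n, |lam α.castSucc - d (idx α)| < ε) ∧
      0 ≤ lam (Fin.last n) - aa ∧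
      lam (Fin.last n) - aa < (((n : ℝ) + 1) - 1) * ε + |∑ α, (d α - d (idx α))| := by
  rw [one_div_mul_eq_div, show (n : ℝ) + 1 - 2 = Fintype.card (Fin n) - 1 by
    rw [Fintype.card_fin]; ring] at hgrow
  simpa only [add_sub_cancel_right] using stmt9_general hn d a aa hA lam hmono hperm ε hε
    (add_sub_lt_of_add_sum_add_le hε hgrow)
end

section
/- Let A = [[d₁, a₁], [conj(a₁), 𝐚]] be a 2×2 Hermitian matrix with d₁, 𝐚 real and a₁ a nonzero complex number, and let λ₁ ≤ λ₂ be its eigenvalues. For any ε > 0, if 𝐚 ≥ |a₁|²/ε + d₁, then 0 ≤ d₁ − λ₁ = λ₂ − 𝐚 < ε. -/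
open Filter

/-!
Put `x = d₁ − λ₁`. The trace gives `x = λ₂ − 𝐚`, and the characteristic equation at `λ₁` reads
`x (x + (𝐚 − d₁)) = |a₁|²`. The two factors have the nonnegative product `|a₁|²` and the
nonnegative sum `λ₂ − λ₁`, so both are nonnegative. If `x ≥ ε`, the left-hand side would exceed
`ε (𝐚 − d₁)`, which is at least `|a₁|²` by assumption.
-/

section OrderedRing

variable {R : Type*} [Ring R] [LinearOrder R] [IsStrictOrderedRing R] {x y g ε : R}

theorem nonneg_left_of_add_nonneg_of_mul_nonneg (hadd : 0 ≤ x + y) (hmul : 0 ≤ x * y) :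
    0 ≤ x := by
  rcases mul_nonneg_iff.mp hmul with ⟨hx, -⟩ | ⟨-, hy⟩
  · exact hx
  · exact hadd.trans (add_le_of_nonpos_right hy)

theorem lt_of_mul_add_le_mul (hε : 0 < ε) (hg : 0 ≤ g) (h : x * (x + g) ≤ ε * g) : x < ε := by
  by_contra! hεx
  have hx : 0 < x := hε.trans_le hεx
  refine h.not_gt ?_
  calc
    ε * g ≤ x * g := mul_le_mul_of_nonneg_right hεx hg
    _ < x * (x + g) := mul_lt_mul_of_pos_left (lt_add_of_pos_left g hx) hx

end OrderedRing

section HermitianTwoByTwo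

open scoped ComplexConjugate

variable {𝕜 : Type*} [RCLike 𝕜] {d a : ℝ} {b : 𝕜}

theorem sum_eigenvalues_hermitian_fin_two
    (hA : (!![(d : 𝕜), b; conj b, (a : 𝕜)]).IsHermitian) :
    ∑ i, hA.eigenvalues i = d + a := by
  have htrace := hA.trace_eq_sum_eigenvalues
  rw [Matrix.trace_fin_two_of] at htrace
  exact_mod_cast htrace.symm

theorem prod_eigenvalues_hermitian_fin_two
    (hA : (!![(d : 𝕜), b; conj b, (a : 𝕜)]).IsHermitian) :
    ∏ i, hA.eigenvalues i = d * a - ‖b‖ ^ 2 := by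
  have hdet := hA.det_eq_prod_eigenvalues
  rw [Matrix.det_fin_two_of, RCLike.mul_conj] at hdet
  exact_mod_cast hdet.symm

theorem diag_sub_eigenvalue_mul_diag_sub_eigenvalue
    (hA : (!![(d : 𝕜), b; conj b, (a : 𝕜)]).IsHermitian) (i : Fin 2) :
    (d - hA.eigenvalues i) * (a - hA.eigenvalues i) = ‖b‖ ^ 2 := by
  have hsum := sum_eigenvalues_hermitian_fin_two hA
  have hprod := prod_eigenvalues_hermitian_fin_two hA
  rw [Fin.sum_univ_two] at hsum
  rw [Fin.prod_univ_two] at hprod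
  match i with
  | 0 => linear_combination hA.eigenvalues 0 * hsum - hprod
  | 1 => linear_combination hA.eigenvalues 1 * hsum - hprod

end HermitianTwoByTwo

theorem stmt12_general {𝕜 : Type*} [RCLike 𝕜] (d1 aa : ℝ) (a1 : 𝕜)
    (A : Matrix (Fin 2) (Fin 2) 𝕜)
    (hAdef : A = !![(d1 : 𝕜), a1; (starRingEnd 𝕜) a1, (aa : 𝕜)])
    (hA : A.IsHermitian)
    (lam1 lam2 : ℝ) (hle : lam1 ≤ lam2)
    (hperm : ∃ e : Equiv.Perm (Fin 2),
      lam1 = hA.eigenvalues (e 0) ∧ lam2 = hA.eigenvalues (e 1))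
    (ε : ℝ) (hε : 0 < ε)
    (hgrow : aa ≥ ‖a1‖ ^ 2 / ε + d1) :
    0 ≤ d1 - lam1 ∧ d1 - lam1 = lam2 - aa ∧ d1 - lam1 < ε := by
  subst hAdef
  obtain ⟨e, hlam1, hlam2⟩ := hperm
  have htrace : lam1 + lam2 = d1 + aa := by
    rw [hlam1, hlam2, ← Fin.sum_univ_two (fun i => hA.eigenvalues (e i)),
      Equiv.sum_comp e hA.eigenvalues, sum_eigenvalues_hermitian_fin_two]
  have hchar : (d1 - lam1) * (aa - lam1) = ‖a1‖ ^ 2 :=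
    hlam1 ▸ diag_sub_eigenvalue_mul_diag_sub_eigenvalue hA (e 0)
  have hgap : ‖a1‖ ^ 2 / ε ≤ aa - d1 := le_sub_iff_add_le.mpr hgrow
  have hnonneg : 0 ≤ d1 - lam1 :=
    nonneg_left_of_add_nonneg_of_mul_nonneg (y := aa - lam1) (by linarith)
      (by rw [hchar]; positivity)
  have hlt : d1 - lam1 < ε := by
    refine lt_of_mul_add_le_mul hε (le_trans (by positivity) hgap) ?_
    calc
      (d1 - lam1) * (d1 - lam1 + (aa - d1)) = ‖a1‖ ^ 2 := by linear_combination hchar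
      _ ≤ ε * (aa - d1) := (div_le_iff₀' hε).mp hgap
  exact ⟨hnonneg, by linarith, hlt⟩

/-- The 2×2 case: for the Hermitian matrix `[[d₁, a₁], [conj a₁, 𝐚]]` with `a₁ ≠ 0` and
eigenvalues `λ₁ ≤ λ₂`, if `𝐚 ≥ |a₁|²/ε + d₁` then `0 ≤ d₁ − λ₁ = λ₂ − 𝐚 < ε`. -/
theorem stmt12 (d1 aa : ℝ) (a1 : ℂ) (ha1 : a1 ≠ 0)
    (A : Matrix (Fin 2) (Fin 2) ℂ)
    (hAdef : A = !![(d1 : ℂ), a1; (starRingEnd ℂ) a1, (aa : ℂ)])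
    (hA : A.IsHermitian)
    (lam1 lam2 : ℝ) (hle : lam1 ≤ lam2)
    (hperm : ∃ e : Equiv.Perm (Fin 2),
      lam1 = hA.eigenvalues (e 0) ∧ lam2 = hA.eigenvalues (e 1))
    (ε : ℝ) (hε : 0 < ε)
    (hgrow : aa ≥ ‖a1‖ ^ 2 / ε + d1) :
    0 ≤ d1 - lam1 ∧ d1 - lam1 = lam2 - aa ∧ d1 - lam1 < ε :=
  stmt12_general d1 aa a1 A hAdef hA lam1 lam2 hle hperm ε hε hgrow
end

section
/- Let f₁, …, fₙ be nonnegative real numbers, λ₁, …, λₙ arbitrary real numbers, r ∈ {1, …, n} any fixed index, and ε > 0. Then Σ_{i=1}^n f_i|λ_i| ≤ ε·Σ_{i≠r} f_i λ_i² + ε^{−1}·Σ_{i=1}^n f_i + |Σ_{i=1}^n f_i λ_i|. -/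
/-!
By the triangle inequality, the `r`-th term of `∑ ‖x i‖` is at most `‖∑ x i‖ + ∑_{i ≠ r} ‖x i‖`,
so `∑ ‖x i‖` exceeds `‖∑ x i‖` by at most twice the sum over `i ≠ r`. For `x i = f i • v i`, Young's
inequality `2 a ≤ ε a ^ 2 + ε⁻¹` with `a = ‖v i‖`, weighted by `f i`, bounds this doubled sum, so
no quadratic term is needed at `i = r`.
-/

open Finset

variable {ι : Type*}

theorem sum_norm_le_two_mul_sum_erase_add_norm_sum {E : Type*} [SeminormedAddCommGroup E]
    [DecidableEq ι] {s : Finset ι} {r : ι} (hr : r ∈ s) (x : ι → E) :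
    ∑ i ∈ s, ‖x i‖ ≤ 2 * ∑ i ∈ s.erase r, ‖x i‖ + ‖∑ i ∈ s, x i‖ := by
  have term_le : ‖x r‖ ≤ ‖∑ i ∈ s, x i‖ + ∑ i ∈ s.erase r, ‖x i‖ :=
    calc ‖x r‖ = ‖∑ i ∈ s, x i - ∑ i ∈ s.erase r, x i‖ := by
          rw [← add_sum_erase s x hr, add_sub_cancel_right]
      _ ≤ ‖∑ i ∈ s, x i‖ + ‖∑ i ∈ s.erase r, x i‖ := norm_sub_le _ _
      _ ≤ ‖∑ i ∈ s, x i‖ + ∑ i ∈ s.erase r, ‖x i‖ := by gcongr; exact norm_sum_le _ _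
  rw [← add_sum_erase s (fun i ↦ ‖x i‖) hr]
  linarith

theorem two_mul_sum_mul_le_mul_sum_mul_sq_add {K : Type*} [Field K] [LinearOrder K]
    [IsStrictOrderedRing K] {s : Finset ι} {w : ι → K} (hw : ∀ i ∈ s, 0 ≤ w i) (a : ι → K)
    {ε : K} (hε : 0 < ε) :
    2 * ∑ i ∈ s, w i * a i ≤ ε * ∑ i ∈ s, w i * a i ^ 2 + ε⁻¹ * ∑ i ∈ s, w i := by
  simp only [mul_sum, ← sum_add_distrib]
  refine sum_le_sum fun i hi ↦ ?_
  have young : 2 * a i ≤ ε * a i ^ 2 + ε⁻¹ := by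
    simpa only [mul_one, one_pow] using two_mul_le_add_mul_sq (a := a i) (b := 1) hε
  calc 2 * (w i * a i) = w i * (2 * a i) := by ring
    _ ≤ w i * (ε * a i ^ 2 + ε⁻¹) := mul_le_mul_of_nonneg_left young (hw i hi)
    _ = ε * (w i * a i ^ 2) + ε⁻¹ * w i := by ring

theorem stmt13_general {E : Type*} [SeminormedAddCommGroup E] [NormedSpace ℝ E] [DecidableEq ι]
    {s : Finset ι} {r : ι} (hr : r ∈ s) {f : ι → ℝ} (hf : ∀ i ∈ s.erase r, 0 ≤ f i) (v : ι → E)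
    {ε : ℝ} (hε : 0 < ε) :
    ∑ i ∈ s, f i * ‖v i‖ ≤
      ε * ∑ i ∈ s.erase r, f i * ‖v i‖ ^ 2 + ε⁻¹ * ∑ i ∈ s.erase r, f i
        + ‖∑ i ∈ s, f i • v i‖ :=
  calc ∑ i ∈ s, f i * ‖v i‖
    _ ≤ ∑ i ∈ s, ‖f i • v i‖ := by
        simp only [norm_smul]
        gcongr
        exact Real.le_norm_self _
    _ ≤ 2 * ∑ i ∈ s.erase r, ‖f i • v i‖ + ‖∑ i ∈ s, f i • v i‖ :=
        sum_norm_le_two_mul_sum_erase_add_norm_sum hr _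
    _ = 2 * ∑ i ∈ s.erase r, f i * ‖v i‖ + ‖∑ i ∈ s, f i • v i‖ := by
        rw [sum_congr rfl fun i hi ↦ norm_smul_of_nonneg (hf i hi) (v i)]
    _ ≤ _ := by
        gcongr
        exact two_mul_sum_mul_le_mul_sum_mul_sq_add hf _ hε

/-- Inequality (7.14): for nonnegative `f₁,…,fₙ`, arbitrary reals `λ₁,…,λₙ`, any fixed index
`r` and any `ε > 0`,
`Σ f_i |λ_i| ≤ ε Σ_{i≠r} f_i λ_i² + ε⁻¹ Σ f_i + |Σ f_i λ_i|`. -/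
theorem stmt13 {n : ℕ} (f lam : Fin n → ℝ) (hf : ∀ i, 0 ≤ f i) (r : Fin n)
    (ε : ℝ) (hε : 0 < ε) :
    ∑ i, f i * |lam i| ≤
      ε * ∑ i ∈ Finset.univ.erase r, f i * lam i ^ 2
        + ε⁻¹ * ∑ i, f i + |∑ i, f i * lam i| := by
  have general := stmt13_general (mem_univ r) (fun i _ ↦ hf i) lam hε
  simp only [Real.norm_eq_abs, sq_abs, smul_eq_mul] at general
  exact general.trans (by gcongr; exacts [fun i _ _ ↦ hf i, erase_subset _ _])
end

section
/- Let ε > 0. If λ is an eigenvalue of the arrow matrix A such that |λ − d_i| ≥ ε for every 1 ≤ i ≤ n−1, then |λ − 𝐚| ≤ (1/ε)·Σ_{i=1}^{n−1}|a_i|². -/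
open Filter

/-! For an arrow matrix `A` with last column `b`, last row `c` and corner entry `z`, and for `μ`
distinct from every `d i`, the diagonal block of `μ - A` is invertible. Its Schur complement
vanishes exactly when `μ` is an eigenvalue, which is the secular equation
`μ - z = ∑ b i * c i / (μ - d i)`. If all denominators have norm at least `ε`, the triangle
inequality bounds the right-hand side. -/

section BorderedDiagonal

open Matrix

variable {ι K : Type*} [DecidableEq ι]

/-- The diagonal matrix with entries `d`, bordered by one extra column `b`, one extra row `c` and
the corner entry `z`: the arrow matrix over an arbitrary index type and without the Hermitian
symmetry. The border is indexed by `Fin 1`, so that for `ι = Fin n` the equivalence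
`finSumFinEquiv` identifies the index type with `Fin (n + 1)`. -/
def borderedDiagonal [Zero K] (d b c : ι → K) (z : K) : Matrix (ι ⊕ Fin 1) (ι ⊕ Fin 1) K :=
  fromBlocks (diagonal d) (replicateCol (Fin 1) b) (replicateRow (Fin 1) c) (of fun _ _ ↦ z)

theorem arrowMatrix_eq_reindexAlgEquiv {n : ℕ} (d : Fin n → ℝ) (a : Fin n → ℂ) (aa : ℝ) :
    arrowMatrix d a aa = reindexAlgEquiv ℂ ℂ finSumFinEquiv
      (borderedDiagonal (fun i ↦ (d i : ℂ)) a (fun i ↦ starRingEnd ℂ (a i)) aa) := by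
  ext i j
  cases i using Fin.lastCases <;> cases j using Fin.lastCases <;>
    simp [arrowMatrix, borderedDiagonal, diagonal_apply]

theorem spectrum_arrowMatrix {n : ℕ} (d : Fin n → ℝ) (a : Fin n → ℂ) (aa : ℝ) :
    spectrum ℂ (arrowMatrix d a aa) =
      spectrum ℂ (borderedDiagonal (fun i ↦ (d i : ℂ)) a (fun i ↦ starRingEnd ℂ (a i)) aa) := by
  rw [arrowMatrix_eq_reindexAlgEquiv, AlgEquiv.spectrum_eq]

variable [Fintype ι]

theorem algebraMap_sub_borderedDiagonal [CommRing K] (d b c : ι → K) (z μ : K) :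
    algebraMap K _ μ - borderedDiagonal d b c z =
      borderedDiagonal (fun i ↦ μ - d i) (-b) (-c) (μ - z) := by
  ext (i | i) (j | j)
  case inl.inl =>
    obtain rfl | hij := eq_or_ne i j <;> simp [borderedDiagonal, algebraMap_matrix_apply, *]
  all_goals simp [borderedDiagonal, algebraMap_matrix_apply, eq_iff_true_of_subsingleton]

theorem det_borderedDiagonal [Field K] {d : ι → K} (hd : ∀ i, d i ≠ 0) (b c : ι → K) (z : K) :
    (borderedDiagonal d b c z).det = (∏ i, d i) * (z - ∑ i, b i * c i / d i) := by
  have hinv : diagonal d * diagonal d⁻¹ = 1 := by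
    simp only [diagonal_mul_diagonal, Pi.inv_apply, mul_inv_cancel₀ (hd _), diagonal_one]
  let := invertibleOfRightInverse _ _ hinv
  have hschur : (replicateRow (Fin 1) c * diagonal d⁻¹ * replicateCol (Fin 1) b) 0 0 =
      ∑ i, b i * c i / d i := by
    rw [mul_apply]
    refine Finset.sum_congr rfl fun i _ ↦ ?_
    rw [mul_diagonal, replicateRow_apply, replicateCol_apply, Pi.inv_apply]
    ring
  rw [borderedDiagonal, det_fromBlocks₁₁, invOf_eq_right_inv hinv, det_diagonal, det_fin_one,
    Matrix.sub_apply, hschur, of_apply]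

theorem mem_spectrum_borderedDiagonal_iff [Field K] {d : ι → K} {μ : K} (hμ : ∀ i, μ ≠ d i)
    (b c : ι → K) (z : K) :
    μ ∈ spectrum K (borderedDiagonal d b c z) ↔ μ - z = ∑ i, b i * c i / (μ - d i) := by
  have hd : ∀ i, μ - d i ≠ 0 := fun i ↦ sub_ne_zero.mpr (hμ i)
  have hprod : ∏ i, (μ - d i) ≠ 0 := Finset.prod_ne_zero_iff.mpr fun i _ ↦ hd i
  rw [spectrum.mem_iff, algebraMap_sub_borderedDiagonal, isUnit_iff_isUnit_det,
    det_borderedDiagonal hd, isUnit_iff_ne_zero, not_not, mul_eq_zero_iff_left hprod, sub_eq_zero]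
  simp only [Pi.neg_apply, neg_mul_neg]

end BorderedDiagonal

theorem norm_sum_div_le {ι K : Type*} [NormedDivisionRing K] (s : Finset ι) (x : ι → K) {w : ι → K}
    {ε : ℝ} (hε : 0 < ε) (hw : ∀ i ∈ s, ε ≤ ‖w i‖) :
    ‖∑ i ∈ s, x i / w i‖ ≤ (∑ i ∈ s, ‖x i‖) / ε := by
  rw [Finset.sum_div]
  refine norm_sum_le_of_le s fun i hi ↦ ?_
  rw [norm_div]
  exact div_le_div_of_nonneg_left (norm_nonneg _) hε (hw i hi)

theorem stmt15_general {ι K : Type*} [Fintype ι] [DecidableEq ι] [NormedField K] {d b c : ι → K}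
    {z μ : K} {ε : ℝ} (hε : 0 < ε) (hμ : μ ∈ spectrum K (borderedDiagonal d b c z))
    (hfar : ∀ i, ε ≤ ‖μ - d i‖) :
    ‖μ - z‖ ≤ (1 / ε) * ∑ i, ‖b i‖ * ‖c i‖ := by
  have hne : ∀ i, μ ≠ d i := fun i ↦ sub_ne_zero.mp (norm_pos_iff.mp (hε.trans_le (hfar i)))
  calc ‖μ - z‖ = ‖∑ i, b i * c i / (μ - d i)‖ := by
        rw [(mem_spectrum_borderedDiagonal_iff hne b c z).mp hμ]
    _ ≤ (∑ i, ‖b i * c i‖) / ε := norm_sum_div_le _ _ hε fun i _ ↦ hfar i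
    _ = (1 / ε) * ∑ i, ‖b i‖ * ‖c i‖ := by simp only [norm_mul, one_div, inv_mul_eq_div]

/-- If `λ` is an eigenvalue of the arrow matrix with `|λ − d_i| ≥ ε` for every `i ≤ n−1`,
then `|λ − 𝐚| ≤ (1/ε)·Σ_i |a_i|²`. -/
theorem stmt15 {n : ℕ} (hn : 1 ≤ n) (d : Fin n → ℝ) (a : Fin n → ℂ) (aa : ℝ)
    (ε : ℝ) (hε : 0 < ε) (lam : ℝ)
    (hlam : (lam : ℂ) ∈ spectrum ℂ (arrowMatrix d a aa))
    (hfar : ∀ i, ε ≤ |lam - d i|) :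
    |lam - aa| ≤ (1 / ε) * ∑ i, ‖a i‖ ^ 2 := by
  rw [spectrum_arrowMatrix] at hlam
  simpa [← Complex.ofReal_sub, sq] using
    stmt15_general hε hlam (by simpa [← Complex.ofReal_sub] using hfar)
end

section
/- Suppose i₀ ≠ j₀ are two indices in {1, …, n−1} with d_{i₀} = d_{j₀}. Then d_{i₀} is an eigenvalue of the arrow matrix A for every value of the parameter 𝐚, and the characteristic polynomial factors as det(λ·I − A) = (λ − d_{i₀})·det(λ·I − A′), where A′ is the (n−1)×(n−1) Hermitian arrow matrix obtained from A by deleting the i₀-th row and column and replacing the off-diagonal entry a_{j₀} by (|a_{j₀}|² + |a_{i₀}|²)^{1/2}. Consequently, the eigenvalues of A (with multiplicity) are d_{i₀} together with the eigenvalues of A′. -/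
open Filter

/-!
The characteristic polynomial of the arrow matrix `A` is
`(X - 𝐚) ∏ᵢ (X - dᵢ) - ∑ᵢ |aᵢ|² ∏_{j ≠ i} (X - dⱼ)`. If `d_{i₀} = d_{j₀}`, then every term
contains the factor `X - d_{i₀}`, and the summands of `i₀` and `j₀` are multiples of the same
product. Taking out this factor therefore leaves the characteristic polynomial of an arrow matrix
in which `i₀` is deleted and `j₀` carries the weight `|a_{j₀}|² + |a_{i₀}|²`.
-/

open Finset Matrix Polynomial

section BorderedMatrix

variable {n ι R : Type*} [Fintype n] [DecidableEq n] [Unique ι] [Fintype ι] [DecidableEq ι]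
  [CommRing R]

theorem det_fromBlocks_replicateCol_replicateRow_of_isLeftRegular {A : Matrix n n R}
    (hA : IsLeftRegular A.det) (u v : n → R) (c : R) :
    (fromBlocks A (replicateCol ι u) (replicateRow ι v) (diagonal fun _ => c)).det =
      c * A.det - v ⬝ᵥ A.adjugate *ᵥ u := by
  -- Clearing the column with `A.adjugate` instead of `A⁻¹` costs a factor `A.det`, which cancels.
  have elimination :
      fromBlocks A (replicateCol ι u) (replicateRow ι v) (diagonal fun _ => c) *
          fromBlocks 1 (-replicateCol ι (A.adjugate *ᵥ u)) 0 (diagonal fun _ => A.det) =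
        fromBlocks A 0 (replicateRow ι v)
          (diagonal fun _ => c * A.det - v ⬝ᵥ A.adjugate *ᵥ u) := by
    rw [fromBlocks_multiply, fromBlocks_inj]
    refine ⟨by simp, ?_, by simp, ?_⟩
    · ext i j
      simp [replicateCol_mulVec, ← Matrix.mul_assoc, mul_adjugate, mul_comm]
    · ext i j
      obtain rfl := Subsingleton.elim i j
      simp [mul_apply, dotProduct, ← sub_eq_neg_add]
  have det_elimination := congrArg det elimination
  rw [det_mul, det_fromBlocks_zero₂₁, det_fromBlocks_zero₁₂, det_one, one_mul, det_diagonal,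
    det_diagonal, Fintype.prod_unique, Fintype.prod_unique, mul_comm] at det_elimination
  exact hA det_elimination

theorem charpoly_fromBlocks_diagonal_replicateCol_replicateRow (d u v : n → R) (c : R) :
    (fromBlocks (diagonal d) (replicateCol ι u) (replicateRow ι v)
        (diagonal fun _ => c)).charpoly =
      (X - C c) * ∏ i, (X - C (d i)) -
        ∑ i, C (u i * v i) * ∏ j ∈ univ.erase i, (X - C (d j)) := by
  have charmatrix_eq :
      (fromBlocks (diagonal d) (replicateCol ι u) (replicateRow ι v)
          (diagonal fun _ => c)).charmatrix =
        fromBlocks (diagonal d).charmatrix (replicateCol ι fun i => -C (u i))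
          (replicateRow ι fun i => -C (v i)) (diagonal fun _ => X - C c) := by
    rw [charmatrix_fromBlocks, charmatrix_diagonal (fun _ : ι => c)]
    rfl
  rw [charpoly, charmatrix_eq, det_fromBlocks_replicateCol_replicateRow_of_isLeftRegular
    (charpoly_monic (diagonal d)).isRegular.left, ← charpoly, charpoly_diagonal,
    charmatrix_diagonal, adjugate_diagonal]
  simp only [dotProduct, mulVec_diagonal, C_mul]
  refine congrArg _ (sum_congr rfl fun i _ => ?_)
  ring

end BorderedMatrix

section DeletedProducts

variable {M R : Type*} [CommMonoid M] [CommSemiring R] {m : ℕ}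

theorem prod_erase_eq_prod_succAbove (f : Fin (m + 1) → M) (i : Fin (m + 1)) :
    ∏ j ∈ univ.erase i, f j = ∏ γ, f (i.succAbove γ) := by
  simp [Fin.univ_succAbove m i]

theorem prod_erase_succAbove (f : Fin (m + 1) → M) (i : Fin (m + 1)) (β : Fin m) :
    ∏ j ∈ univ.erase (i.succAbove β), f j = f i * ∏ γ ∈ univ.erase β, f (i.succAbove γ) := by
  rw [Fin.univ_succAbove m i, erase_cons_of_ne _ (i.succAbove_ne β).symm, prod_cons,
    ← Fin.coe_succAboveEmb, ← map_erase, prod_map]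

theorem sum_mul_prod_erase_of_eq_succAbove (f w : Fin (m + 1) → R) {i : Fin (m + 1)} {k : Fin m}
    (hf : f i = f (i.succAbove k)) :
    ∑ j, w j * ∏ l ∈ univ.erase j, f l =
      f i * ∑ β, (w (i.succAbove β) + if β = k then w i else 0) *
        ∏ γ ∈ univ.erase β, f (i.succAbove γ) := by
  have prod_erase_i : ∏ l ∈ univ.erase i, f l = f i * ∏ γ ∈ univ.erase k, f (i.succAbove γ) := by
    rw [prod_erase_eq_prod_succAbove, hf, mul_prod_erase univ (f <| i.succAbove ·) (mem_univ k)]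
  calc
    ∑ j, w j * ∏ l ∈ univ.erase j, f l
    _ = w i * (f i * ∏ γ ∈ univ.erase k, f (i.succAbove γ)) +
          ∑ β, w (i.succAbove β) * (f i * ∏ γ ∈ univ.erase β, f (i.succAbove γ)) := by
      simp only [Fin.sum_univ_succAbove _ i, prod_erase_i, prod_erase_succAbove]
    _ = f i * (∑ β, w (i.succAbove β) * ∏ γ ∈ univ.erase β, f (i.succAbove γ) +
          w i * ∏ γ ∈ univ.erase k, f (i.succAbove γ)) := by
      simp only [mul_left_comm _ (f i), ← mul_sum]
      ring
    _ = _ := by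
      simp only [add_mul, sum_add_distrib, ite_mul, zero_mul, sum_ite_eq', mem_univ, if_true]

end DeletedProducts

theorem arrowMatrix_eq_reindex_fromBlocks {n : ℕ} (d : Fin n → ℝ) (a : Fin n → ℂ) (aa : ℝ) :
    arrowMatrix d a aa =
      reindex finSumFinEquiv finSumFinEquiv
        (fromBlocks (diagonal fun i => (d i : ℂ)) (replicateCol (Fin 1) a)
          (replicateRow (Fin 1) (star a)) (diagonal fun _ => (aa : ℂ))) := by
  ext i j
  refine Fin.lastCases ?_ (fun α => ?_) i <;> refine Fin.lastCases ?_ (fun β => ?_) j <;>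
    simp [arrowMatrix, diagonal_apply]

theorem charpoly_arrowMatrix {n : ℕ} (d : Fin n → ℝ) (a : Fin n → ℂ) (aa : ℝ) :
    (arrowMatrix d a aa).charpoly =
      (X - C (aa : ℂ)) * ∏ i, (X - C (d i : ℂ)) -
        ∑ i, C ((‖a i‖ ^ 2 : ℝ) : ℂ) * ∏ j ∈ univ.erase i, (X - C (d j : ℂ)) := by
  rw [arrowMatrix_eq_reindex_fromBlocks, charpoly_reindex,
    charpoly_fromBlocks_diagonal_replicateCol_replicateRow]
  simp only [Pi.star_apply, RCLike.star_def, Complex.mul_conj', Complex.ofReal_pow]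

theorem charpoly_arrowMatrix_eq_X_sub_C_mul {m : ℕ} (d : Fin (m + 1) → ℝ) (a : Fin (m + 1) → ℂ)
    (aa : ℝ) {i : Fin (m + 1)} {k : Fin m} (hd : d i = d (i.succAbove k)) {a' : Fin m → ℂ}
    (ha' : ∀ β, ‖a' β‖ ^ 2 = ‖a (i.succAbove β)‖ ^ 2 + if β = k then ‖a i‖ ^ 2 else 0) :
    (arrowMatrix d a aa).charpoly =
      (X - C (d i : ℂ)) * (arrowMatrix (i.removeNth d) a' aa).charpoly := by
  have merged_sum := sum_mul_prod_erase_of_eq_succAbove (fun j => X - C (d j : ℂ))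
    (fun j => C ((‖a j‖ ^ 2 : ℝ) : ℂ)) (congrArg (fun x : ℝ => X - C (x : ℂ)) hd)
  have merged_weight (β : Fin m) : C ((‖a' β‖ ^ 2 : ℝ) : ℂ) =
      C ((‖a (i.succAbove β)‖ ^ 2 : ℝ) : ℂ) +
        if β = k then C ((‖a i‖ ^ 2 : ℝ) : ℂ) else 0 := by
    rw [ha']
    split_ifs <;> simp
  rw [charpoly_arrowMatrix, charpoly_arrowMatrix, merged_sum, Fin.prod_univ_succAbove _ i]
  simp only [Fin.removeNth_apply, merged_weight]
  ring

theorem map_eigenvalues_eq_cons_of_charpoly_eq {𝕜 n m : Type*} [RCLike 𝕜] [Fintype n]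
    [DecidableEq n] [Fintype m] [DecidableEq m] {A : Matrix n n 𝕜} {B : Matrix m m 𝕜}
    (hA : A.IsHermitian) (hB : B.IsHermitian) {μ : ℝ}
    (h : A.charpoly = (X - C (μ : 𝕜)) * B.charpoly) :
    univ.val.map hA.eigenvalues = μ ::ₘ univ.val.map hB.eigenvalues := by
  have roots_eq : A.charpoly.roots = (μ : 𝕜) ::ₘ B.charpoly.roots := by
    rw [h, roots_mul ((monic_X_sub_C _).mul B.charpoly_monic).ne_zero, roots_X_sub_C,
      Multiset.singleton_add]
  rw [hA.roots_charpoly_eq_eigenvalues, hB.roots_charpoly_eq_eigenvalues] at roots_eq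
  apply Multiset.map_injective (RCLike.ofReal_injective (K := 𝕜))
  simpa only [Multiset.map_cons, Multiset.map_map] using roots_eq

/-- Reduction when two diagonal entries coincide (`d_{i₀} = d_{j₀}`, `i₀ ≠ j₀`): `d_{i₀}` is an
eigenvalue of the arrow matrix `A`, the characteristic polynomial factors as
`det(λI − A) = (λ − d_{i₀})·det(λI − A′)` where `A′` is the smaller arrow matrix obtained by
deleting the `i₀`-th row and column and replacing `a_{j₀}` by `(|a_{j₀}|² + |a_{i₀}|²)^{1/2}`,
and the eigenvalues of `A` (with multiplicity) are `d_{i₀}` together with those of `A′`.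
(Here the big matrix has total size `m+2 ≥ 3`.) -/
theorem stmt16 {m : ℕ} (hm : 1 ≤ m) (d : Fin (m + 1) → ℝ) (a : Fin (m + 1) → ℂ) (aa : ℝ)
    (i0 j0 : Fin (m + 1)) (hij : i0 ≠ j0) (hd : d i0 = d j0)
    (d' : Fin m → ℝ) (a' : Fin m → ℂ)
    (hd' : ∀ β : Fin m, d' β = d (i0.succAbove β))
    (ha' : ∀ β : Fin m, a' β = if i0.succAbove β = j0
        then ((Real.sqrt (‖a j0‖ ^ 2 + ‖a i0‖ ^ 2) : ℝ) : ℂ)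
        else a (i0.succAbove β))
    (hA : (arrowMatrix d a aa).IsHermitian)
    (hA' : (arrowMatrix d' a' aa).IsHermitian) :
    ((d i0 : ℂ) ∈ spectrum ℂ (arrowMatrix d a aa)) ∧
    (∀ lam : ℂ,
      (lam • (1 : Matrix (Fin (m + 2)) (Fin (m + 2)) ℂ) - arrowMatrix d a aa).det
        = (lam - (d i0 : ℂ)) *
            (lam • (1 : Matrix (Fin (m + 1)) (Fin (m + 1)) ℂ) - arrowMatrix d' a' aa).det) ∧
    (Finset.univ.val.map hA.eigenvalues = (d i0) ::ₘ Finset.univ.val.map hA'.eigenvalues) := by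
  obtain ⟨k, rfl⟩ := Fin.exists_succAbove_eq hij.symm
  obtain rfl : d' = i0.removeNth d := funext hd'
  have norm_sq_a' (β : Fin m) :
      ‖a' β‖ ^ 2 = ‖a (i0.succAbove β)‖ ^ 2 + if β = k then ‖a i0‖ ^ 2 else 0 := by
    rw [ha']
    rcases eq_or_ne β k with rfl | hβ
    · rw [if_pos rfl, if_pos rfl, Complex.norm_real, Real.norm_eq_abs, sq_abs,
        Real.sq_sqrt (by positivity)]
    · rw [if_neg (Fin.succAbove_right_injective.ne hβ), if_neg hβ, add_zero]
  have charpoly_eq := charpoly_arrowMatrix_eq_X_sub_C_mul d a aa hd norm_sq_a'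
  refine ⟨?_, fun lam => ?_, map_eigenvalues_eq_cons_of_charpoly_eq hA hA' charpoly_eq⟩
  · rw [mem_spectrum_iff_isRoot_charpoly, charpoly_eq]
    exact root_mul_right_of_isRoot _ (root_X_sub_C.mpr rfl)
  · simpa only [eval_mul, eval_sub, eval_X, eval_C, eval_charpoly, scalar_apply,
      ← smul_one_eq_diagonal] using congrArg (eval lam) charpoly_eq
end
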